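/- (Triangle c) Let 0 ≤ α_1 ≤ 1/2 and 0 ≤ α_2, α_3 < 1/2 with α_1 + α_2 + α_3 = 1. For each i = 1,2,3 let E_i ⊆ [0,∞) be measurable of finite measure and let j be an index with |E_j| maximal. Then there exists a major subset E_j' ⊆ E_j (i.e., |E_j'| ≥ |E_j|/2), depending on E_1, E_2, E_3, such that for all measurable f_i with |f_i| ≤ 1_{E_i} for i ≠ j and |f_j| ≤ 1_{E_j'}, one has |Λ_L(f_1, f_2, f_3)| ≤ C |E_1|^{α_1} |E_2|^{α_2} |E_3|^{α_3} with C depending only on α_1, α_2, α_3 and independent of L. Moreover, if the measures |E_1|, |E_2|, |E_3| lie within a factor of four of each other, one may take E_j' = E_j. -/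

import Mathlib

open MeasureTheory Set ENNReal NNReal

noncomputable section

namespace Quartile

/-- The Walsh functions on `[0,1)` (extended by zero), in Walsh-Paley order,
defined by the recursion `W_{2l} = W_l(2x) + W_l(2x-1)`, `W_{2l+1} = W_l(2x) - W_l(2x-1)`. -/
def walsh (n : ℕ) (x : ℝ) : ℝ :=
  if h : n = 0 then (if 0 ≤ x ∧ x < 1 then 1 else 0)
  else if n % 2 = 0 then walsh (n / 2) (2 * x) + walsh (n / 2) (2 * x - 1)
  else walsh (n / 2) (2 * x) - walsh (n / 2) (2 * x - 1)
termination_by n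
decreasing_by
  all_goals exact Nat.div_lt_self (Nat.pos_of_ne_zero h) one_lt_two

/-- The dyadic interval `[2^k n, 2^k (n+1)) ⊆ [0,∞)`. -/
def dyadicI (k : ℤ) (n : ℕ) : Set ℝ := Ico ((2:ℝ)^k * n) ((2:ℝ)^k * (n+1))

/-- A tile: the dyadic rectangle `[2^k n, 2^k(n+1)) × [2^{-k} l, 2^{-k}(l+1))` of area one. -/
structure Tile where
  k : ℤ
  n : ℕ
  l : ℕ

namespace Tile

/-- The time interval `I_p` of a tile. -/
def timeI (p : Tile) : Set ℝ := Ico ((2:ℝ)^p.k * p.n) ((2:ℝ)^p.k * (p.n+1))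

/-- The frequency interval `ω_p` of a tile. -/
def freqI (p : Tile) : Set ℝ := Ico ((2:ℝ)^(-p.k) * p.l) ((2:ℝ)^(-p.k) * (p.l+1))

/-- The tile as a subset of the phase plane. -/
def toSet (p : Tile) : Set (ℝ × ℝ) := p.timeI ×ˢ p.freqI

/-- The Walsh wave packet `w_p` of a tile, `L²`-normalized. -/
def wp (p : Tile) (x : ℝ) : ℝ :=
  Real.sqrt ((2:ℝ)^(-p.k)) * walsh p.l ((2:ℝ)^(-p.k) * x - p.n)

end Tile

/-- The order on dyadic rectangles: `p ≤ q` iff `I_p ⊆ I_q` and `ω_q ⊆ ω_p`, for tiles. -/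
def tileLE (p q : Tile) : Prop := p.timeI ⊆ q.timeI ∧ q.freqI ⊆ p.freqI

/-- The inner product `⟨f, w_p⟩` of a function with a (real valued) wave packet. -/
def coef (f : ℝ → ℂ) (p : Tile) : ℂ := ∫ x, f x * (p.wp x : ℂ)

/-- The rank one projection `Π_p f = ⟨f, w_p⟩ w_p` associated to a single tile. -/
def projT (p : Tile) (f : ℝ → ℂ) (x : ℝ) : ℂ := coef f p * (p.wp x : ℂ)

/-- The projection associated to a collection of (pairwise disjoint) tiles. -/
def projSet (𝔭 : Set Tile) (f : ℝ → ℂ) (x : ℝ) : ℂ := ∑' p : 𝔭, projT p f x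

/-- The maximal tiles contained in a subset `S` of the phase plane; when `S` is a disjoint
union of tiles (of the kind appearing below) these form the canonical tiling of `S`. -/
def maxTiles (S : Set (ℝ × ℝ)) : Set Tile :=
  {p | p.toSet ⊆ S ∧ ∀ q : Tile, q.toSet ⊆ S → tileLE p q → q = p}

/-- The phase plane projection `Π_S` associated to a subset `S` of the phase plane,
computed with the canonical tiling of `S` by maximal tiles (the projection is independent
of the chosen tiling). -/
def piProj (S : Set (ℝ × ℝ)) (f : ℝ → ℂ) (x : ℝ) : ℂ := projSet (maxTiles S) f x

/-- A bitile: the dyadic rectangle `[2^k n, 2^k(n+1)) × [2^{1-k} l, 2^{1-k}(l+1))` of area two. -/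
structure Bitile where
  k : ℤ
  n : ℕ
  l : ℕ

namespace Bitile

/-- The time interval `I_P` of a bitile. -/
def timeI (P : Bitile) : Set ℝ := Ico ((2:ℝ)^P.k * P.n) ((2:ℝ)^P.k * (P.n+1))

/-- The frequency interval `ω_P` of a bitile. -/
def freqI (P : Bitile) : Set ℝ := Ico ((2:ℝ)^(1-P.k) * P.l) ((2:ℝ)^(1-P.k) * (P.l+1))

/-- The bitile as a subset of the phase plane. -/
def toSet (P : Bitile) : Set (ℝ × ℝ) := P.timeI ×ˢ P.freqI

/-- The lower tile `P_d` of a bitile. -/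
def d (P : Bitile) : Tile := ⟨P.k, P.n, 2*P.l⟩

/-- The upper tile `P_u` of a bitile. -/
def u (P : Bitile) : Tile := ⟨P.k, P.n, 2*P.l+1⟩

/-- The left tile of a bitile. -/
def left (P : Bitile) : Tile := ⟨P.k-1, 2*P.n, P.l⟩

/-- The right tile of a bitile. -/
def right (P : Bitile) : Tile := ⟨P.k-1, 2*P.n+1, P.l⟩

/-- The `L^∞`-normalized wave packet `φ_{P_d} = |I_P|^{1/2} w_{P_d}`. -/
def phid (P : Bitile) (x : ℝ) : ℝ := Real.sqrt ((2:ℝ)^P.k) * P.d.wp x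

end Bitile

/-- The order on dyadic rectangles, for bitiles. -/
def bitileLE (P Q : Bitile) : Prop := P.timeI ⊆ Q.timeI ∧ Q.freqI ⊆ P.freqI

/-- Strict order on bitiles. -/
def bitileLT (P Q : Bitile) : Prop := bitileLE P Q ∧ P ≠ Q

/-- A collection of bitiles is convex if together with `P₁ < P < P₂` for `P₁, P₂` in the
collection it contains `P`. -/
def IsConvex (PP : Set Bitile) : Prop :=
  ∀ P1 P2 P : Bitile, P1 ∈ PP → P2 ∈ PP → bitileLT P1 P → bitileLT P P2 → P ∈ PP

/-- A tree: a collection of bitiles with a (unique) maximal element `P_T = I_T × ω_T`. -/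
structure Tree where
  carrier : Set Bitile
  top : Bitile
  top_mem : top ∈ carrier
  le_top : ∀ P ∈ carrier, bitileLE P top

namespace Tree

/-- `T_d`: those bitiles of the tree whose lower tile frequency interval contains `ω_T`
(in the paper's notation, `P_T ≤ P_d`). -/
def Td (T : Tree) : Set Bitile := {P | P ∈ T.carrier ∧ T.top.freqI ⊆ P.d.freqI}

/-- `T_u`: those bitiles of the tree whose upper tile frequency interval contains `ω_T`
(in the paper's notation, `P_T ≤ P_u`). -/
def Tu (T : Tree) : Set Bitile := {P | P ∈ T.carrier ∧ T.top.freqI ⊆ P.u.freqI}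

/-- The region `⋃_{P ∈ T} P` of the phase plane occupied by a tree. -/
def unionSet (T : Tree) : Set (ℝ × ℝ) := ⋃ P ∈ T.carrier, P.toSet

/-- The phase plane projection `Π_T` of a (convex) tree. -/
def proj (T : Tree) (f : ℝ → ℂ) : ℝ → ℂ := piProj T.unionSet f

end Tree

/-- The vertical dilation `2^L S` of a subset of the phase plane. -/
def dilate (L : ℕ) (S : Set (ℝ × ℝ)) : Set (ℝ × ℝ) := (fun q => (q.1, (2:ℝ)^L * q.2)) '' S

/-- The enlarged tree `T^{(L)}` with respect to a frequency `ξ ∈ ω_T`: all bitiles `P` with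
`2^L ξ ∈ ω_P` contained in a rectangle `2^L P'` with `P' ∈ T`. -/
def Tree.enlarged (L : ℕ) (T : Tree) (ξ : ℝ) : Set Bitile :=
  {P | (2:ℝ)^L * ξ ∈ P.freqI ∧ ∃ P' ∈ T.carrier, P.toSet ⊆ dilate L P'.toSet}

/-- The region of the phase plane occupied by the enlarged tree `T^{(L)}`. -/
def Tree.enlargedSet (L : ℕ) (T : Tree) (ξ : ℝ) : Set (ℝ × ℝ) :=
  ⋃ P ∈ T.enlarged L ξ, P.toSet

/-- The left endpoint of `ω_T`, a canonical choice of `ξ ∈ ω_T`. -/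
def Tree.xiTop (T : Tree) : ℝ := (2:ℝ)^(1-T.top.k) * T.top.l

/-- The phase plane projection `Π_{T^{(L)}}` of the enlarged tree (independent of the
choice of `ξ ∈ ω_T`; we use the canonical choice).  For `L = 0` this is `Π_T`. -/
def Tree.projL (L : ℕ) (T : Tree) (f : ℝ → ℂ) : ℝ → ℂ := piProj (T.enlargedSet L T.xiTop) f

/-- `size^{(L)}(PP, f) = sup |I_T|^{-1/2} ‖Π_{T^{(L)}} f‖₂`, the supremum over convex trees
`T ⊆ PP`.  For `L = 0` this is the plain `size(PP, f)`. -/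
def size (L : ℕ) (PP : Set Bitile) (f : ℝ → ℂ) : ℝ≥0∞ :=
  ⨆ (T : Tree) (_ : T.carrier ⊆ PP ∧ IsConvex T.carrier),
    (ENNReal.ofReal (Real.sqrt ((2:ℝ)^T.top.k)))⁻¹ * eLpNorm (T.projL L f) 2 volume

/-- The quartile form `Λ_{PP}` restricted to a collection `PP` of bitiles. -/
def quartileFormOn (L : ℕ) (PP : Set Bitile) (f1 f2 f3 : ℝ → ℂ) : ℂ :=
  ∫ x, ∑' P : PP, (P.1.phid x : ℂ) * projT P.1.u f1 x *
      piProj (dilate L P.1.d.toSet) f2 x * piProj (dilate L P.1.d.toSet) f3 x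

/-- The bitiles contained in the strip `ℝ₊ × [0, 2^N)`. -/
def stripBitiles (N : ℕ) : Set Bitile := {P | P.freqI ⊆ Ico (0:ℝ) ((2:ℝ)^N)}

/-- The quartile form `Λ_L` (with frequency truncation parameter `N`). -/
def quartileForm (L N : ℕ) (f1 f2 f3 : ℝ → ℂ) : ℂ :=
  quartileFormOn L (stripBitiles N) f1 f2 f3

/-- The quartile form perturbed by a bounded sequence of coefficients `c_P`. -/
def quartileFormC (L N : ℕ) (c : Bitile → ℂ) (f1 f2 f3 : ℝ → ℂ) : ℂ :=
  ∫ x, ∑' P : stripBitiles N, c P.1 * (P.1.phid x : ℂ) * projT P.1.u f1 x *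
      piProj (dilate L P.1.d.toSet) f2 x * piProj (dilate L P.1.d.toSet) f3 x

/-- The counting function `Σ_{T ∈ 𝕋} 1_{I_T}` of a collection of trees. -/
def countingFn (𝕋 : Set Tree) (x : ℝ) : ℝ≥0∞ :=
  ∑' T : 𝕋, (T.1.top.timeI).indicator (fun _ => (1:ℝ≥0∞)) x

/-- The average of an `ℝ≥0∞`-valued function over a set. -/
def avgOn (I : Set ℝ) (g : ℝ → ℝ≥0∞) : ℝ≥0∞ := (volume I)⁻¹ * ∫⁻ x in I, g x

/-- The dyadic BMO norm on `[0,∞)` of an `ℝ≥0∞`-valued function. -/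
def dyadicBMO (g : ℝ → ℝ≥0∞) : ℝ≥0∞ :=
  ⨆ (k : ℤ) (n : ℕ), avgOn (dyadicI k n)
    (fun x => (g x - avgOn (dyadicI k n) g) + (avgOn (dyadicI k n) g - g x))

/-- The dyadic Hardy-Littlewood maximal function on `[0,∞)`. -/
def dyadicMax (f : ℝ → ℂ) (x : ℝ) : ℝ≥0∞ :=
  ⨆ (k : ℤ) (n : ℕ) (_ : x ∈ dyadicI k n),
    (volume (dyadicI k n))⁻¹ * ∫⁻ y in dyadicI k n, ‖f y‖₊

/-- The dyadic interval of length `2^j` containing `y ≥ 0`. -/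
def freqInterval (j : ℤ) (y : ℝ) : Set ℝ :=
  Ico ((2:ℝ)^j * ⌊y / (2:ℝ)^j⌋) ((2:ℝ)^j * (⌊y / (2:ℝ)^j⌋ + 1))

/-- The projection `Π_l := Π_{I_T × ω_l}`, where `ω_l` is the dyadic interval of
length `2^l` containing the frequency `y`. -/
def PiScale (T : Tree) (j : ℤ) (y : ℝ) (f : ℝ → ℂ) : ℝ → ℂ :=
  piProj (T.top.timeI ×ˢ freqInterval j y) f

/-- The difference projection `Π_l^Δ = Π_l - Π_{l-1}`. -/
def PiDelta (T : Tree) (j : ℤ) (y : ℝ) (f : ℝ → ℂ) (x : ℝ) : ℂ :=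
  PiScale T j y f x - PiScale T (j-1) y f x

/-!
The bitiles are split into trees. If no subtree of a tree with top `T` carries more energy
`∑ ‖Π f_i‖²` than `s_i |I_T|`, then the form restricted to that tree is at most
`5 √(s₁ s₂ s₃) |I_T|`: by Cauchy-Schwarz and a square function bound for `Π f₂ Π f₃`, obtained by
telescoping a potential along the tree. Trees that violate the condition are selected greedily by
frequency; their half tiles away from `ω_T` are then pairwise disjoint, so Bessel's inequality
bounds the total length of the tops. Each round divides the thresholds `s_i` by four, and the
resulting geometric series gives `|Λ_L(f₁, f₂, f₃)| ≤ 240 √τ ∏ √|E_i|` when `s_i = τ |E_i|` is an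
admissible starting point. The dilated tiles `2^L P_d` enter only through the energies
`‖Π_{2^L p} f‖²`, which satisfy Bessel's inequality with constant one for every `L`.

Removing from `E_j` the set where some dyadic maximal function of `1_{E_i}` exceeds
`6 |E_i| / |E_j|` makes `τ = 6 / |E_j|` admissible: a bitile whose time interval lies inside the
removed set contributes nothing, since `f_j` vanishes there. Finally
`√|E_i| ≤ |E_i|^{α_i} |E_j|^{1/2 - α_i}` because `|E_i| ≤ |E_j|`, and these exponents of `|E_j|`
add up to `1/2`.
-/

/-! ### The order on tiles and bitiles -/

/-- The order of `tileLE`, expressed by the integer coordinates: `p ≤ q` iff `I_p ⊆ I_q` and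
`ω_q ⊆ ω_p`. Two tiles are disjoint in the phase plane iff they are incomparable. -/
instance : PartialOrder Tile where
  le p q := ∃ d : ℕ, q.k = p.k + d ∧ p.n / 2 ^ d = q.n ∧ q.l / 2 ^ d = p.l
  le_refl p := ⟨0, by simp⟩
  le_trans p q r := by
    rintro ⟨d, hk, hn, hl⟩ ⟨e, hk', hn', hl'⟩
    refine ⟨d + e, by omega, ?_, ?_⟩
    · rw [pow_add, ← Nat.div_div_eq_div_mul, hn, hn']
    · rw [add_comm, pow_add, ← Nat.div_div_eq_div_mul, hl', hl]
  le_antisymm := by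
    rintro ⟨k, n, l⟩ ⟨k', n', l'⟩ ⟨d, hk, hn, hl⟩ ⟨e, hk', -, -⟩
    obtain rfl : d = 0 := by dsimp only at hk hk'; omega
    simp_all

theorem Tile.le_iff {p q : Tile} :
    p ≤ q ↔ ∃ d : ℕ, q.k = p.k + d ∧ p.n / 2 ^ d = q.n ∧ q.l / 2 ^ d = p.l := Iff.rfl

namespace Bitile

/-- The order of `bitileLE`, expressed by the integer coordinates, which are compared in the same
way as those of tiles. -/
instance : PartialOrder Bitile :=
  PartialOrder.lift (fun P : Bitile => (⟨P.k, P.n, P.l⟩ : Tile)) fun ⟨_, _, _⟩ ⟨_, _, _⟩ h => by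
    simpa only [Tile.mk.injEq, Bitile.mk.injEq] using h

instance : DecidableEq Bitile := Classical.decEq _

instance : DecidableLE Bitile := Classical.decRel _

theorem le_iff {P Q : Bitile} :
    P ≤ Q ↔ ∃ d : ℕ, Q.k = P.k + d ∧ P.n / 2 ^ d = Q.n ∧ Q.l / 2 ^ d = P.l := Iff.rfl

/-- The two half tiles `P_d` (`b = false`) and `P_u` (`b = true`) of a bitile. -/
def half (b : Bool) (P : Bitile) : Tile := ⟨P.k, P.n, 2 * P.l + b.toNat⟩

theorem half_injective (b : Bool) : Function.Injective (half b) := by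
  rintro ⟨k, n, l⟩ ⟨k', n', l'⟩ h
  simp only [half, Tile.mk.injEq, Bitile.mk.injEq] at h ⊢
  omega

/-- `P < Q` and `ω_Q` is contained in the frequency interval of the half `b` of `P`. -/
def HalfLT (b : Bool) (P Q : Bitile) : Prop :=
  ∃ d : ℕ, Q.k = P.k + d + 1 ∧ P.n / 2 ^ (d + 1) = Q.n ∧ Q.l / 2 ^ d = 2 * P.l + b.toNat

/-- The reflexive closure of `HalfLT b`. The bitiles `P` of a tree with top `T` that satisfy
`HalfLE b P T` form the subtree `T_d` (`b = false`) or `T_u` (`b = true`), together with the top. -/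
def HalfLE (b : Bool) (P Q : Bitile) : Prop := P = Q ∨ HalfLT b P Q

instance (b : Bool) (P Q : Bitile) : Decidable (HalfLT b P Q) := Classical.propDecidable _

instance (b : Bool) (P Q : Bitile) : Decidable (HalfLE b P Q) := Classical.propDecidable _

variable {b c : Bool} {P P' Q R T T' : Bitile}

theorem HalfLT.le (h : HalfLT b P Q) : P ≤ Q := by
  obtain ⟨d, hk, hn, hl⟩ := h
  refine ⟨d + 1, by dsimp only; omega, hn, ?_⟩
  rw [pow_succ, ← Nat.div_div_eq_div_mul, hl]
  have := b.toNat_lt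
  dsimp only
  omega

theorem HalfLT.ne (h : HalfLT b P Q) : P ≠ Q := by
  rintro rfl
  obtain ⟨d, hk, -⟩ := h
  omega

theorem HalfLT.side_unique (h : HalfLT b P Q) (h' : HalfLT c P Q) : b = c := by
  obtain ⟨d, hk, -, hl⟩ := h
  obtain ⟨e, hk', -, hl'⟩ := h'
  obtain rfl : d = e := by omega
  have htoNat : b.toNat = c.toNat := by omega
  revert htoNat
  cases b <;> cases c <;> simp

theorem HalfLT.trans_le (h : HalfLT b P Q) (h' : Q ≤ R) : HalfLT b P R := by
  obtain ⟨d, hk, hn, hl⟩ := h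
  obtain ⟨e, hk', hn', hl'⟩ := le_iff.1 h'
  refine ⟨d + e, by omega, ?_, ?_⟩
  · rw [add_right_comm, pow_add, ← Nat.div_div_eq_div_mul, hn, hn']
  · rw [add_comm, pow_add, ← Nat.div_div_eq_div_mul, hl', hl]

theorem HalfLE.refl (b : Bool) (P : Bitile) : HalfLE b P P := Or.inl rfl

theorem HalfLE.le (h : HalfLE b P Q) : P ≤ Q := h.elim le_of_eq HalfLT.le

theorem eq_or_halfLT_of_le (h : P ≤ Q) : P = Q ∨ ∃ b, HalfLT b P Q := by
  obtain ⟨d, hk, hn, hl⟩ := le_iff.1 h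
  rcases d with _ | d
  · left
    cases P; cases Q
    simp_all
  · right
    rw [pow_succ, ← Nat.div_div_eq_div_mul] at hl
    refine ⟨decide (Q.l / 2 ^ d % 2 = 1), d, by omega, hn, ?_⟩
    rcases Nat.mod_two_eq_zero_or_one (Q.l / 2 ^ d) with h | h <;> simp only [h] <;> norm_num <;>
      omega

theorem halfLE_of_half_le (h : P.half b ≤ Q.half b) : HalfLE b P Q := by
  obtain ⟨d, hk, hn, hl⟩ := Tile.le_iff.1 h
  have hdiv : (2 * Q.l + b.toNat) / 2 = Q.l := by have := b.toNat_lt; omega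
  rcases d with _ | d
  · left
    refine half_injective b (h.antisymm ⟨0, ?_⟩)
    simp_all
  · exact Or.inr ⟨d, by simp only [half] at hk; omega, hn,
      by simpa only [half, pow_succ', ← Nat.div_div_eq_div_mul, hdiv] using hl⟩

theorem eq_of_half_le_of_halfLE (hP : HalfLE b P T) (hP' : HalfLE b P' T)
    (h : P.half (!b) ≤ P'.half (!b)) : P = P' := by
  rcases halfLE_of_half_le h with h | h
  · exact h
  have hT : HalfLT (!b) P T := h.trans_le hP'.le
  rcases hP with rfl | hP
  · exact absurd rfl hT.ne
  · exact absurd (hP.side_unique hT) (by simp)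

/-- The midpoint of the frequency interval of a bitile. -/
def centerFreq (P : Bitile) : ℝ := (2 : ℝ) ^ (-P.k) * (2 * P.l + 1)

theorem HalfLT.centerFreq_mem (h : HalfLT b P Q) :
    (2 : ℝ) ^ P.k * Q.centerFreq ∈
      Ioo (2 * P.l + b.toNat : ℝ) (2 * P.l + b.toNat + 1) := by
  obtain ⟨d, hk, -, hl⟩ := h
  have hcenter : (2 : ℝ) ^ P.k * Q.centerFreq = (2 * Q.l + 1) / (2 * 2 ^ d) := by
    rw [centerFreq, ← mul_assoc, ← zpow_add₀ two_ne_zero, hk,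
      show P.k + -(P.k + d + 1) = -((d + 1 : ℕ) : ℤ) by push_cast; ring, zpow_neg, zpow_natCast,
      pow_succ']
    field_simp
  have hlower : (2 * P.l + b.toNat) * 2 ^ d ≤ Q.l :=
    (Nat.le_div_iff_mul_le (by positivity)).1 hl.ge
  have hupper : Q.l + 1 ≤ (2 * P.l + b.toNat + 1) * 2 ^ d :=
    (Nat.div_lt_iff_lt_mul (by positivity)).1 (hl.trans_lt (Nat.lt_succ_self _))
  have hlower' : (2 * P.l + b.toNat : ℝ) * 2 ^ d ≤ Q.l := by exact_mod_cast hlower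
  have hupper' : (Q.l + 1 : ℝ) ≤ (2 * P.l + b.toNat + 1) * 2 ^ d := by exact_mod_cast hupper
  rw [hcenter]
  constructor
  · rw [lt_div_iff₀ (by positivity)]
    linarith
  · rw [div_lt_iff₀ (by positivity)]
    linarith

/-- The key `± centerFreq` by which greedily selected trees are ordered, so that no half tile of a
later tree lies above a half tile of an earlier one. -/
def selectionKey (b : Bool) (P : Bitile) : ℝ := if b then -P.centerFreq else P.centerFreq

theorem selectionKey_lt (hT : HalfLE b P T) (hT' : HalfLT (!b) P T') :
    selectionKey b T < selectionKey b T' := by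
  have hpos : (0 : ℝ) < 2 ^ P.k := by positivity
  have hT'mem := hT'.centerFreq_mem
  rcases hT with rfl | hT
  · have hself : (2 : ℝ) ^ P.k * P.centerFreq = 2 * P.l + 1 := by
      rw [centerFreq, ← mul_assoc, ← zpow_add₀ two_ne_zero, add_neg_cancel, zpow_zero, one_mul]
    cases b <;> refine lt_of_mul_lt_mul_left ?_ hpos.le <;>
      norm_num [selectionKey] at hT'mem ⊢ <;> linarith
  · have hTmem := hT.centerFreq_mem
    cases b <;> refine lt_of_mul_lt_mul_left ?_ hpos.le <;>
      norm_num [selectionKey] at hTmem hT'mem ⊢ <;> linarith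

theorem incomparable_half_of_selectionKey_le (hP : HalfLE b P T) (hP' : HalfLE b P' T')
    (hnot : ¬ P' ≤ T) (hkey : selectionKey b T' ≤ selectionKey b T) :
    ¬ P.half (!b) ≤ P'.half (!b) ∧ ¬ P'.half (!b) ≤ P.half (!b) := by
  refine ⟨fun h => ?_, fun h => hnot ((halfLE_of_half_le h).le.trans hP.le)⟩
  rcases halfLE_of_half_le h with rfl | h
  · exact hnot hP.le
  · exact (selectionKey_lt hP (h.trans_le hP'.le)).not_ge hkey

end Bitile

open Bitile

/-! ### Size and the selection of trees -/

/-- Bessel's inequality for a tile energy `e`, such as `e p = |⟨f, w_p⟩|²`: its sum over pairwise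
disjoint tiles is at most `B`. -/
def BesselBound (e : Tile → ℝ) (B : ℝ) : Prop :=
  ∀ 𝔭 : Finset Tile, IsAntichain (· ≤ ·) (𝔭 : Set Tile) → ∑ p ∈ 𝔭, e p ≤ B

/-- The energy of the half tiles opposite to `ω_T` of the bitiles in the subtree of `PP` with
top `T` and side `b`. -/
def treeEnergy (e : Tile → ℝ) (b : Bool) (PP : Finset Bitile) (T : Bitile) : ℝ :=
  ∑ P ∈ PP with HalfLE b P T, e (P.half !b)

/-- The square of the size of `PP` with respect to the tile energy `e` is at most `s`. -/
def SizeLE (e : Tile → ℝ) (PP : Finset Bitile) (s : ℝ) : Prop :=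
  ∀ b, ∀ T ∈ PP, treeEnergy e b PP T ≤ s * 2 ^ T.k

/-- What remains of `PP` after removing the trees with tops in `𝕋`. -/
def removeTrees (PP 𝕋 : Finset Bitile) : Finset Bitile := {P ∈ PP | ∀ T ∈ 𝕋, ¬ P ≤ T}

section Selection

variable {e : Tile → ℝ} {b : Bool} {PP QQ 𝕋 𝕋' : Finset Bitile} {P T : Bitile} {s B : ℝ}

theorem mem_removeTrees : P ∈ removeTrees PP 𝕋 ↔ P ∈ PP ∧ ∀ T ∈ 𝕋, ¬ P ≤ T := Finset.mem_filter

theorem removeTrees_subset (PP 𝕋 : Finset Bitile) : removeTrees PP 𝕋 ⊆ PP :=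
  Finset.filter_subset _ _

theorem removeTrees_empty (PP : Finset Bitile) : removeTrees PP ∅ = PP := by
  simp [removeTrees]

theorem removeTrees_singleton (PP : Finset Bitile) (T : Bitile) :
    removeTrees PP {T} = {P ∈ PP | ¬ P ≤ T} := by
  simp [removeTrees]

theorem removeTrees_anti (PP : Finset Bitile) (h : 𝕋 ⊆ 𝕋') :
    removeTrees PP 𝕋' ⊆ removeTrees PP 𝕋 :=
  Finset.monotone_filter_right _ fun _ _ hP T hT => hP T (h hT)

theorem removeTrees_union (PP 𝕋 𝕋' : Finset Bitile) :
    removeTrees PP (𝕋 ∪ 𝕋') = removeTrees (removeTrees PP 𝕋) 𝕋' := by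
  ext P
  simp only [mem_removeTrees, Finset.mem_union, or_imp, forall_and, and_assoc]

theorem ordConnected_removeTrees (h : (PP : Set Bitile).OrdConnected) (𝕋 : Finset Bitile) :
    (removeTrees PP 𝕋 : Set Bitile).OrdConnected := by
  refine ⟨fun P₁ h₁ P₂ h₂ P hP => ?_⟩
  simp only [Finset.mem_coe, mem_removeTrees] at h₁ h₂ ⊢
  exact ⟨h.out h₁.1 h₂.1 hP, fun T hT hPT => h₁.2 T hT (hP.1.trans hPT)⟩

theorem treeEnergy_mono (he : ∀ p, 0 ≤ e p) (h : QQ ⊆ PP) (b : Bool) (T : Bitile) :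
    treeEnergy e b QQ T ≤ treeEnergy e b PP T :=
  Finset.sum_le_sum_of_subset_of_nonneg (Finset.filter_subset_filter _ h) fun _ _ _ => he _

theorem SizeLE.mono (he : ∀ p, 0 ≤ e p) (h : SizeLE e PP s) (hs : QQ ⊆ PP) : SizeLE e QQ s :=
  fun b T hT => (treeEnergy_mono he hs b T).trans (h b T (hs hT))

theorem SizeLE.half_le (he : ∀ p, 0 ≤ e p) (h : SizeLE e PP s) (hP : P ∈ PP) (b : Bool) :
    e (P.half b) ≤ s * 2 ^ P.k := by
  have hmem : P ∈ ({Q ∈ PP | HalfLE (!b) Q P} : Finset Bitile) :=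
    Finset.mem_filter.2 ⟨hP, .refl _ _⟩
  have := (Finset.single_le_sum (fun Q _ => he (Q.half !!b)) hmem).trans (h (!b) P hP)
  rwa [Bool.not_not] at this

/-- The outcome of the greedy selection from `PP` of trees of side `b` with energy above the
threshold `s`: the tops `𝕋`, and the bitiles `S` of the selected trees. -/
structure TreeSelection (e : Tile → ℝ) (b : Bool) (s : ℝ) (PP 𝕋 S : Finset Bitile) : Prop where
  tops_subset : 𝕋 ⊆ PP
  subset : S ⊆ PP
  antichain : IsAntichain (fun P Q => P.half (!b) ≤ Q.half (!b)) (S : Set Bitile)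
  exists_top : ∀ P ∈ S, ∃ T ∈ 𝕋, HalfLE b P T
  lt_treeEnergy : ∀ T ∈ 𝕋, s * 2 ^ T.k < treeEnergy e b PP T
  sum_tops_le : s * ∑ T ∈ 𝕋, (2 : ℝ) ^ T.k ≤ ∑ P ∈ S, e (P.half !b)
  treeEnergy_le : ∀ T ∈ removeTrees PP 𝕋, treeEnergy e b (removeTrees PP 𝕋) T ≤ s * 2 ^ T.k

theorem TreeSelection.empty (h : ∀ T ∈ PP, treeEnergy e b PP T ≤ s * 2 ^ T.k) :
    TreeSelection e b s PP ∅ ∅ where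
  tops_subset := Finset.empty_subset _
  subset := Finset.empty_subset _
  antichain := by simp
  exists_top := by simp
  lt_treeEnergy := by simp
  sum_tops_le := by simp
  treeEnergy_le := by rwa [removeTrees_empty]

theorem isAntichain_filter_halfLE (b : Bool) (PP : Finset Bitile) (T : Bitile) :
    IsAntichain (fun P Q => P.half (!b) ≤ Q.half (!b))
      (({P ∈ PP | HalfLE b P T} : Finset Bitile) : Set Bitile) :=
  fun _ hP _ hQ hne hle => hne <| eq_of_half_le_of_halfLE
    (Finset.mem_filter.1 (Finset.mem_coe.1 hP)).2 (Finset.mem_filter.1 (Finset.mem_coe.1 hQ)).2 hle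

theorem TreeSelection.insert {S : Finset Bitile} (he : ∀ p, 0 ≤ e p) (hT : T ∈ PP)
    (hbad : s * 2 ^ T.k < treeEnergy e b PP T)
    (hmax : ∀ T' ∈ PP, s * 2 ^ T'.k < treeEnergy e b PP T' → selectionKey b T' ≤ selectionKey b T)
    (h : TreeSelection e b s (removeTrees PP {T}) 𝕋 S) :
    TreeSelection e b s PP (insert T 𝕋) ({P ∈ PP | HalfLE b P T} ∪ S) := by
  have hsub := removeTrees_subset PP {T}
  have hnot : ∀ P ∈ removeTrees PP {T}, ¬ P ≤ T := fun P hP => by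
    simpa using (mem_removeTrees.1 hP).2
  have hbad' : ∀ T' ∈ 𝕋, s * 2 ^ T'.k < treeEnergy e b PP T' := fun T' hT' =>
    (h.lt_treeEnergy T' hT').trans_le (treeEnergy_mono he hsub b T')
  have hcross : ∀ P ∈ ({P ∈ PP | HalfLE b P T} : Finset Bitile), ∀ Q ∈ S,
      ¬ P.half (!b) ≤ Q.half (!b) ∧ ¬ Q.half (!b) ≤ P.half (!b) := fun P hP Q hQ => by
    obtain ⟨T', hT', hQT'⟩ := h.exists_top Q hQ
    exact incomparable_half_of_selectionKey_le (Finset.mem_filter.1 hP).2 hQT'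
      (hnot Q (h.subset hQ)) (hmax T' (hsub (h.tops_subset hT')) (hbad' T' hT'))
  refine ⟨?_, ?_, ?_, ?_, ?_, ?_, ?_⟩
  · exact Finset.insert_subset hT (h.tops_subset.trans hsub)
  · exact Finset.union_subset (Finset.filter_subset _ _) (h.subset.trans hsub)
  · rw [Finset.coe_union, isAntichain_union]
    exact ⟨isAntichain_filter_halfLE b PP T, h.antichain, fun P hP Q hQ _ => hcross P hP Q hQ⟩
  · intro P hP
    rcases Finset.mem_union.1 hP with hP | hP
    · exact ⟨T, Finset.mem_insert_self _ _, (Finset.mem_filter.1 hP).2⟩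
    · obtain ⟨T', hT', hPT'⟩ := h.exists_top P hP
      exact ⟨T', Finset.mem_insert_of_mem hT', hPT'⟩
  · exact Finset.forall_mem_insert _ _ _ |>.2 ⟨hbad, hbad'⟩
  · have hTnot : T ∉ 𝕋 := fun hT => hnot T (h.tops_subset hT) le_rfl
    have hdisj : Disjoint ({P ∈ PP | HalfLE b P T} : Finset Bitile) S :=
      Finset.disjoint_left.2 fun P hP hPS =>
        hnot P (h.subset hPS) (Finset.mem_filter.1 hP).2.le
    rw [Finset.sum_insert hTnot, Finset.sum_union hdisj, mul_add]
    exact add_le_add hbad.le h.sum_tops_le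
  · rw [Finset.insert_eq, removeTrees_union]
    exact h.treeEnergy_le

theorem exists_treeSelection (he : ∀ p, 0 ≤ e p) (b : Bool) (s : ℝ) (PP : Finset Bitile) :
    ∃ 𝕋 S, TreeSelection e b s PP 𝕋 S := by
  induction PP using Finset.strongInduction with
  | H PP ih =>
    by_cases hbad : ({T ∈ PP | s * 2 ^ T.k < treeEnergy e b PP T} : Finset Bitile).Nonempty
    · obtain ⟨T, hT, hmax⟩ := Finset.exists_max_image _ (selectionKey b) hbad
      obtain ⟨hTPP, hTbad⟩ := Finset.mem_filter.1 hT
      have hssub : removeTrees PP {T} ⊂ PP :=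
        Finset.filter_ssubset.2 ⟨T, hTPP, by simp⟩
      obtain ⟨𝕋, S, h⟩ := ih _ hssub
      exact ⟨_, _, h.insert he hTPP hTbad fun T' hT' hbad' =>
        hmax T' (Finset.mem_filter.2 ⟨hT', hbad'⟩)⟩
    · refine ⟨∅, ∅, .empty fun T hT => not_lt.1 fun hlt => hbad ⟨T, ?_⟩⟩
      exact Finset.mem_filter.2 ⟨hT, hlt⟩

theorem exists_tops_treeEnergy_le (he : ∀ p, 0 ≤ e p) (hB : BesselBound e B) (b : Bool) (s : ℝ)
    (PP : Finset Bitile) :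
    ∃ 𝕋 ⊆ PP, s * ∑ T ∈ 𝕋, (2 : ℝ) ^ T.k ≤ B ∧
      ∀ T ∈ removeTrees PP 𝕋, treeEnergy e b (removeTrees PP 𝕋) T ≤ s * 2 ^ T.k := by
  classical
  obtain ⟨𝕋, S, h⟩ := exists_treeSelection he b s PP
  refine ⟨𝕋, h.tops_subset, h.sum_tops_le.trans ?_, h.treeEnergy_le⟩
  have hanti : IsAntichain (· ≤ ·) ((S.image (half !b) : Finset Tile) : Set Tile) := by
    rw [Finset.coe_image]
    rintro _ ⟨P, hP, rfl⟩ _ ⟨Q, hQ, rfl⟩ hne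
    exact h.antichain hP hQ fun hPQ => hne (hPQ ▸ rfl)
  simpa only [Finset.sum_image (half_injective _).injOn] using hB _ hanti

theorem sum_two_zpow_union_le (𝕋 𝕋' : Finset Bitile) :
    ∑ T ∈ 𝕋 ∪ 𝕋', (2 : ℝ) ^ T.k ≤ ∑ T ∈ 𝕋, (2 : ℝ) ^ T.k + ∑ T ∈ 𝕋', (2 : ℝ) ^ T.k := by
  rw [← Finset.sum_union_inter]
  exact le_add_of_nonneg_right (Finset.sum_nonneg fun _ _ => by positivity)

theorem exists_tops_sizeLE (he : ∀ p, 0 ≤ e p) (hB : BesselBound e B) (hs : 0 ≤ s)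
    (PP : Finset Bitile) :
    ∃ 𝕋 ⊆ PP, s * ∑ T ∈ 𝕋, (2 : ℝ) ^ T.k ≤ 2 * B ∧ SizeLE e (removeTrees PP 𝕋) s := by
  choose 𝕋 hsub hsum hsize using fun b => exists_tops_treeEnergy_le he hB b s PP
  refine ⟨𝕋 false ∪ 𝕋 true, Finset.union_subset (hsub _) (hsub _), ?_, fun b T hT => ?_⟩
  · calc s * ∑ T ∈ 𝕋 false ∪ 𝕋 true, (2 : ℝ) ^ T.k
        ≤ s * (∑ T ∈ 𝕋 false, (2 : ℝ) ^ T.k + ∑ T ∈ 𝕋 true, (2 : ℝ) ^ T.k) := by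
          gcongr
          exact sum_two_zpow_union_le _ _
      _ ≤ 2 * B := by linarith [hsum false, hsum true]
  · have hanti : removeTrees PP (𝕋 false ∪ 𝕋 true) ⊆ removeTrees PP (𝕋 b) :=
      removeTrees_anti PP (by cases b <;> simp)
    exact (treeEnergy_mono he hanti b T).trans (hsize b T (hanti hT))

end Selection

/-! ### The square function of a tree -/

namespace Tile

/-- The tile of half the length of `p` and the same frequency index whose time interval is the left
(`c = false`) or right (`c = true`) half of `I_p`. -/
def timeHalf (c : Bool) (p : Tile) : Tile := ⟨p.k - 1, 2 * p.n + c.toNat, p.l⟩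

end Tile

namespace Bitile

/-- The bitile just below `P` whose time interval is the left (`c = false`) or right (`c = true`)
half of `I_P`. -/
def child (c : Bool) (P : Bitile) : Bitile := ⟨P.k - 1, 2 * P.n + c.toNat, P.l / 2⟩

/-- The half of `P` whose frequency interval contains `ω_T`, for `P < T`. By convention it is the
lower half for `P = T`. -/
def side (T P : Bitile) : Bool := decide (HalfLT true P T)

/-- The half tile of `P` whose frequency interval contains `ω_T`. -/
def nearHalf (T P : Bitile) : Tile := P.half (side T P)

/-- The half tile of `P` whose frequency interval is disjoint from `ω_T`. -/
def farHalf (T P : Bitile) : Tile := P.half !(side T P)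

variable {b c c' : Bool} {P P' T : Bitile}

theorem HalfLT.side_eq (h : HalfLT b P T) : side T P = b := by
  cases b
  · exact decide_eq_false fun h' => absurd (h.side_unique h') (by simp)
  · exact decide_eq_true h

theorem side_self (T : Bitile) : side T T = false := decide_eq_false fun h => h.ne rfl

theorem HalfLE.side_eq_false (h : HalfLE false P T) : side T P = false := by
  rcases h with rfl | h
  · exact side_self P
  · exact h.side_eq

theorem halfLE_side (h : P ≤ T) : HalfLE (side T P) P T := by
  rcases eq_or_halfLT_of_le h with rfl | ⟨b, hb⟩
  · exact .refl _ _
  · exact hb.side_eq ▸ Or.inr hb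

theorem halfLT_child (c : Bool) (P : Bitile) : HalfLT P.l.bodd (child c P) P := by
  have hbodd := Nat.bodd_add_div2 P.l
  have hc := c.toNat_lt
  rw [Nat.div2_val] at hbodd
  exact ⟨0, by simp [child], by simp only [child]; omega, by simp only [child]; omega⟩

theorem nearHalf_child (h : P ≤ T) (c : Bool) :
    nearHalf T (child c P) = ⟨P.k - 1, 2 * P.n + c.toNat, P.l⟩ := by
  have hbodd := Nat.bodd_add_div2 P.l
  rw [Nat.div2_val] at hbodd
  rw [nearHalf, ((halfLT_child c P).trans_le h).side_eq]
  simp only [half, child, Tile.mk.injEq, true_and]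
  omega

theorem child_inj (h : P ≤ T) (h' : P' ≤ T) (heq : child c P = child c' P') : P = P' ∧ c = c' := by
  have htile := congrArg (nearHalf T) heq
  rw [nearHalf_child h, nearHalf_child h', Tile.mk.injEq] at htile
  obtain ⟨hk, hn, hl⟩ := htile
  cases P; cases P'
  cases c <;> cases c' <;> simp_all <;> omega

theorem exists_eq_child_of_le_of_ne (h : P ≤ T) (hne : P ≠ T) :
    ∃ Q ≤ T, ∃ c, P = child c Q := by
  obtain ⟨b, d, hk, hn, hl⟩ := (eq_or_halfLT_of_le h).resolve_left hne
  have hb := b.toNat_lt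
  have hbodd := Nat.bodd_add_div2 P.n
  rw [Nat.div2_val] at hbodd
  refine ⟨⟨P.k + 1, P.n / 2, 2 * P.l + b.toNat⟩, ⟨d, by dsimp only; omega, ?_, hl⟩, P.n.bodd, ?_⟩
  · dsimp only
    rw [Nat.div_div_eq_div_mul, ← pow_succ', hn]
  · cases P
    simp only [child, Bitile.mk.injEq] at hbodd ⊢
    omega

theorem sum_sum_child {PP : Finset Bitile} (h : (PP : Set Bitile).OrdConnected) (hT : T ∈ PP)
    (ψ : Bitile → ℝ) :
    ∑ P ∈ PP with P ≤ T, ∑ c, (if child c P ∈ PP then ψ (child c P) else 0) =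
      ∑ P ∈ PP with P ≤ T, ψ P - ψ T := by
  have hTmem : T ∈ ({P ∈ PP | P ≤ T} : Finset Bitile) := Finset.mem_filter.2 ⟨hT, le_rfl⟩
  rw [← Finset.sum_erase_eq_sub hTmem, ← Finset.sum_product', ← Finset.sum_filter]
  refine Finset.sum_nbij (fun x => child x.2 x.1) ?_ ?_ ?_ fun _ _ => rfl
  · rintro ⟨P, c⟩ hx
    simp only [Finset.mem_filter, Finset.mem_product, Finset.mem_erase] at hx ⊢
    have hlt := (halfLT_child c P).trans_le hx.1.1.2
    exact ⟨hlt.ne, hx.2, hlt.le⟩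
  · rintro ⟨P, c⟩ hx ⟨P', c'⟩ hx' heq
    simp only [Finset.coe_filter, Finset.mem_product, Finset.mem_filter, mem_ofPred_eq] at hx hx'
    exact Prod.ext_iff.2 (child_inj hx.1.1.2 hx'.1.1.2 heq)
  · rintro P hP
    simp only [Finset.coe_erase, Finset.coe_filter, mem_sdiff, mem_ofPred_eq,
      mem_singleton_iff] at hP
    obtain ⟨Q, hQT, c, rfl⟩ := exists_eq_child_of_le_of_ne hP.1.2 hP.2
    have hQ : Q ∈ PP := h.out hP.1.1 hT ⟨(halfLT_child c Q).le, hQT⟩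
    exact ⟨(Q, c), by simpa using ⟨⟨hQ, hQT⟩, hP.1.1⟩, rfl⟩

end Bitile

section SquareFunction

variable {H : Type*} [NormedAddCommGroup H] {B : Tile → H} {r : Tile → ℝ}
  {PP : Finset Bitile} {P T : Bitile} {s : ℝ}

theorem SizeLE.sum_farHalf_le (hr : ∀ p, 0 ≤ r p) (hsize : SizeLE r PP s) (hT : T ∈ PP) :
    ∑ P ∈ PP with P ≤ T, r (farHalf T P) ≤ 2 * s * 2 ^ T.k := by
  have hsplit : ∀ P ∈ ({P ∈ PP | P ≤ T} : Finset Bitile), r (farHalf T P) ≤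
      ∑ b, if HalfLE b P T then r (P.half !b) else 0 := fun P hP => by
    have hle := Finset.single_le_sum (s := Finset.univ) (a := side T P)
      (f := fun b => if HalfLE b P T then r (P.half !b) else 0)
      (fun b _ => by split_ifs <;> simp [hr]) (Finset.mem_univ _)
    simpa only [farHalf, if_pos (halfLE_side (Finset.mem_filter.1 hP).2)] using hle
  calc ∑ P ∈ PP with P ≤ T, r (farHalf T P)
      ≤ ∑ P ∈ PP with P ≤ T, ∑ b, if HalfLE b P T then r (P.half !b) else 0 :=
        Finset.sum_le_sum hsplit
    _ ≤ ∑ P ∈ PP, ∑ b, if HalfLE b P T then r (P.half !b) else 0 :=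
        Finset.sum_le_sum_of_subset_of_nonneg (Finset.filter_subset _ _) fun P _ _ =>
          Finset.sum_nonneg fun b _ => by split_ifs <;> simp [hr]
    _ = ∑ b, treeEnergy r b PP T := by
        rw [Finset.sum_comm]
        simp only [treeEnergy, Finset.sum_filter]
    _ ≤ ∑ _b : Bool, s * 2 ^ T.k := Finset.sum_le_sum fun b _ => hsize b T hT
    _ = 2 * s * 2 ^ T.k := by
        rw [Fintype.sum_bool]
        ring

/-- The two tilings `P_d ∪ P_u` and `P_left ∪ P_right` of a bitile have the same total of `B`, as
is the case for `B p = ∫ Π_p f · Π_p g`. -/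
def SplitAdditive {A : Type*} [Add A] (B : Tile → A) : Prop :=
  ∀ P : Bitile, B P.d + B P.u = B P.left + B P.right

theorem SplitAdditive.nearHalf_add_farHalf (hB : SplitAdditive B) (hPT : P ≤ T) (c : Bool) :
    B ((nearHalf T P).timeHalf c) + B ((farHalf T P).timeHalf c) =
      B ((nearHalf T (child c P)).timeHalf false) +
        B ((nearHalf T (child c P)).timeHalf true) := by
  have hsplit := hB ⟨P.k - 1, 2 * P.n + c.toNat, P.l⟩
  rw [nearHalf_child hPT]
  refine Eq.trans ?_ hsplit
  rw [nearHalf, farHalf]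
  cases side T P
  · rfl
  · exact add_comm _ _

theorem norm_timeHalf_le (hBr : ∀ p, ‖B (p.timeHalf false)‖ + ‖B (p.timeHalf true)‖ ≤ r p)
    (c : Bool) (p : Tile) : ‖B (p.timeHalf c)‖ ≤ r p := by
  have := hBr p
  have := norm_nonneg (B (p.timeHalf false))
  have := norm_nonneg (B (p.timeHalf true))
  cases c <;> linarith

theorem two_mul_norm_sq_div_le {x y : H} {K : ℝ} (hK : 0 < K)
    (hxy : ‖x + y‖ ≤ s * (K / 2)) (hy : ‖y‖ ≤ s * K) :
    2 * ‖x‖ ^ 2 / K ≤ ‖x + y‖ ^ 2 / (K / 2) + 4 * s * ‖y‖ := by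
  have htriangle : ‖x‖ ≤ ‖x + y‖ + ‖y‖ := by simpa using norm_sub_le (x + y) y
  have hsq : ‖x‖ ^ 2 ≤ ‖x + y‖ ^ 2 + 2 * s * K * ‖y‖ := by
    nlinarith [norm_nonneg x, norm_nonneg y, norm_nonneg (x + y)]
  calc 2 * ‖x‖ ^ 2 / K ≤ 2 * (‖x + y‖ ^ 2 + 2 * s * K * ‖y‖) / K := by gcongr
    _ = ‖x + y‖ ^ 2 / (K / 2) + 4 * s * ‖y‖ := by
        field_simp
        ring

/-- The potential whose increments along the tree with top `T` control the square function. The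
correction `4 s² |I_P|` is additive over the children and pays for those missing from the tree. -/
def treePotential (B : Tile → H) (s : ℝ) (T P : Bitile) : ℝ :=
  ‖B ((nearHalf T P).timeHalf false) + B ((nearHalf T P).timeHalf true)‖ ^ 2 / 2 ^ P.k -
    4 * s ^ 2 * 2 ^ P.k

theorem two_mul_norm_sq_nearHalf_le (hr : ∀ p, 0 ≤ r p) (hB : SplitAdditive B)
    (hBr : ∀ p, ‖B (p.timeHalf false)‖ + ‖B (p.timeHalf true)‖ ≤ r p)
    (hs : 0 ≤ s) (hsize : SizeLE r PP s) (hP : P ∈ PP) (hPT : P ≤ T) (c : Bool) :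
    2 * ‖B ((nearHalf T P).timeHalf c)‖ ^ 2 / 2 ^ P.k ≤
      (if child c P ∈ PP then treePotential B s T (child c P) else 0) + 2 * s ^ 2 * 2 ^ P.k +
        4 * s * ‖B ((farHalf T P).timeHalf c)‖ := by
  have hK : (0 : ℝ) < 2 ^ P.k := by positivity
  split_ifs with hchild
  · have hk : (2 : ℝ) ^ (child c P).k = 2 ^ P.k / 2 := by
      rw [child, zpow_sub_one₀ two_ne_zero, div_eq_mul_inv]
    have hadd := hB.nearHalf_add_farHalf hPT c
    have hnear : ‖B ((nearHalf T P).timeHalf c) + B ((farHalf T P).timeHalf c)‖ ≤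
        s * (2 ^ P.k / 2) := by
      rw [hadd, ← hk]
      exact (norm_add_le _ _).trans ((hBr _).trans (hsize.half_le hr hchild _))
    have hfar := (norm_timeHalf_le hBr c (farHalf T P)).trans (hsize.half_le hr hP _)
    refine (two_mul_norm_sq_div_le hK hnear hfar).trans (le_of_eq ?_)
    rw [treePotential, hk, hadd]
    ring
  · have hnear := (norm_timeHalf_le hBr c (nearHalf T P)).trans (hsize.half_le hr hP _)
    have hsq : 2 * ‖B ((nearHalf T P).timeHalf c)‖ ^ 2 / 2 ^ P.k ≤ 2 * s ^ 2 * 2 ^ P.k := by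
      rw [div_le_iff₀ hK]
      nlinarith [norm_nonneg (B ((nearHalf T P).timeHalf c))]
    have : 0 ≤ 4 * s * ‖B ((farHalf T P).timeHalf c)‖ := by positivity
    linarith

theorem norm_sq_sub_div_le_treePotential [InnerProductSpace ℝ H] (hr : ∀ p, 0 ≤ r p)
    (hB : SplitAdditive B) (hBr : ∀ p, ‖B (p.timeHalf false)‖ + ‖B (p.timeHalf true)‖ ≤ r p)
    (hs : 0 ≤ s) (hsize : SizeLE r PP s) (hP : P ∈ PP) (hPT : P ≤ T) :
    ‖B ((nearHalf T P).timeHalf false) - B ((nearHalf T P).timeHalf true)‖ ^ 2 / 2 ^ P.k ≤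
      ∑ c, (if child c P ∈ PP then treePotential B s T (child c P) else 0) -
        treePotential B s T P + 4 * s * r (farHalf T P) := by
  have hchild := two_mul_norm_sq_nearHalf_le hr hB hBr hs hsize hP hPT
  have hfalse := hchild false
  have htrue := hchild true
  have hfar := mul_le_mul_of_nonneg_left (hBr (farHalf T P)) (show 0 ≤ 4 * s by positivity)
  set x := B ((nearHalf T P).timeHalf false)
  set y := B ((nearHalf T P).timeHalf true)
  have hpotential : treePotential B s T P =
      ‖x + y‖ ^ 2 / 2 ^ P.k - 4 * s ^ 2 * 2 ^ P.k := rfl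
  have hparallelogram : ‖x - y‖ ^ 2 / 2 ^ P.k =
      2 * ‖x‖ ^ 2 / 2 ^ P.k + 2 * ‖y‖ ^ 2 / 2 ^ P.k - ‖x + y‖ ^ 2 / (2 : ℝ) ^ P.k := by
    rw [← add_div, div_sub_div_same]
    congr 1
    linarith [parallelogram_law_with_norm ℝ x y, sq ‖x - y‖, sq ‖x + y‖, sq ‖x‖, sq ‖y‖]
  rw [Fintype.sum_bool, hpotential, hparallelogram]
  linarith

theorem sum_norm_sq_sub_le [InnerProductSpace ℝ H] (hr : ∀ p, 0 ≤ r p) (hB : SplitAdditive B)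
    (hBr : ∀ p, ‖B (p.timeHalf false)‖ + ‖B (p.timeHalf true)‖ ≤ r p)
    (hPP : (PP : Set Bitile).OrdConnected) (hs : 0 ≤ s) (hsize : SizeLE r PP s) (hT : T ∈ PP) :
    ∑ P ∈ PP with P ≤ T,
      ‖B ((nearHalf T P).timeHalf false) - B ((nearHalf T P).timeHalf true)‖ ^ 2 / 2 ^ P.k ≤
      12 * s ^ 2 * 2 ^ T.k := by
  have hincrement := Finset.sum_le_sum fun P hP =>
    norm_sq_sub_div_le_treePotential (P := P) (T := T) hr hB hBr hs hsize
      (Finset.mem_filter.1 hP).1 (Finset.mem_filter.1 hP).2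
  rw [Finset.sum_add_distrib, Finset.sum_sub_distrib, sum_sum_child hPP hT,
    ← Finset.mul_sum] at hincrement
  have hfar := mul_le_mul_of_nonneg_left (hsize.sum_farHalf_le hr hT)
    (show 0 ≤ 4 * s by positivity)
  have htop : -(4 * s ^ 2 * 2 ^ T.k) ≤ treePotential B s T T := by
    rw [treePotential, neg_eq_zero_sub]
    gcongr
    positivity
  linarith

end SquareFunction

/-! ### The tree estimate and the decomposition into trees -/

/-- The coefficients `a p` of `f₁` and `B p` of `f₂ f₃`, dominated by energies `e i` of `f_i`. -/
structure FormData (a B : Tile → ℂ) (e : Fin 3 → Tile → ℝ) : Prop where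
  energy_nonneg : ∀ i p, 0 ≤ e i p
  norm_sq_le : ∀ p, ‖a p‖ ^ 2 ≤ e 0 p
  splitAdditive : SplitAdditive B
  norm_timeHalf_add_le : ∀ p,
    ‖B (p.timeHalf false)‖ + ‖B (p.timeHalf true)‖ ≤ √(e 1 p) * √(e 2 p)

/-- The contribution of a bitile to the form with coefficients `a` and `B`. -/
def bitileTerm (a B : Tile → ℂ) (P : Bitile) : ℂ :=
  a P.u * ((√(2 ^ P.k))⁻¹ : ℝ) * (B (P.d.timeHalf false) - B (P.d.timeHalf true))

theorem norm_bitileTerm (a B : Tile → ℂ) (P : Bitile) :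
    ‖bitileTerm a B P‖ =
      ‖a P.u‖ * ((√(2 ^ P.k))⁻¹ * ‖B (P.d.timeHalf false) - B (P.d.timeHalf true)‖) := by
  rw [bitileTerm, norm_mul, norm_mul, Complex.norm_real, Real.norm_of_nonneg (by positivity),
    mul_assoc]

theorem prod_sqrt_mul (E : Fin 3 → ℝ) {τ : ℝ} (hτ : 0 ≤ τ) :
    ∏ i, √(E i * τ) = (∏ i, √(E i)) * √τ ^ 3 := by
  simp only [Real.sqrt_mul' _ hτ, Finset.prod_mul_distrib, Finset.prod_const, Finset.card_univ,
    Fintype.card_fin]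

theorem sqrt_mul_mul_sqrt_mul (s t : ℝ) {K : ℝ} (hK : 0 ≤ K) :
    √(s * K) * √(t * K) = √s * √t * K := by
  rw [Real.sqrt_mul' _ hK, Real.sqrt_mul' _ hK, mul_mul_mul_comm, Real.mul_self_sqrt hK]

theorem SizeLE.sqrt_mul_sqrt {e e' : Tile → ℝ} {PP : Finset Bitile} {s s' : ℝ}
    (he : ∀ p, 0 ≤ e p) (he' : ∀ p, 0 ≤ e' p) (h : SizeLE e PP s) (h' : SizeLE e' PP s') :
    SizeLE (fun p => √(e p) * √(e' p)) PP (√s * √s') := fun b T hT => by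
  rw [← sqrt_mul_mul_sqrt_mul _ _ (by positivity)]
  refine (Real.sum_sqrt_mul_sqrt_le _ (fun _ => he _) fun _ => he' _).trans ?_
  exact mul_le_mul (Real.sqrt_le_sqrt (h b T hT)) (Real.sqrt_le_sqrt (h' b T hT))
    (Real.sqrt_nonneg _) (Real.sqrt_nonneg _)

namespace FormData

variable {a B : Tile → ℂ} {e : Fin 3 → Tile → ℝ} {PP 𝕋 : Finset Bitile} {P T : Bitile}
  {s E : Fin 3 → ℝ} {τ : ℝ}

theorem sizeLE_sqrt_mul_sqrt (D : FormData a B e) (hsize : ∀ i, SizeLE (e i) PP (s i)) :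
    SizeLE (fun p => √(e 1 p) * √(e 2 p)) PP (√(s 1) * √(s 2)) :=
  .sqrt_mul_sqrt (D.energy_nonneg 1) (D.energy_nonneg 2) (hsize 1) (hsize 2)

theorem norm_bitileTerm_le (D : FormData a B e) (hsize : SizeLE (e 0) PP (s 0)) (hP : P ∈ PP) :
    ‖bitileTerm a B P‖ ≤ √(s 0) * (√(e 1 P.d) * √(e 2 P.d)) := by
  have hK : (0 : ℝ) < 2 ^ P.k := by positivity
  have ha : ‖a P.u‖ * (√(2 ^ P.k))⁻¹ ≤ √(s 0) := by
    rw [← div_eq_mul_inv, div_le_iff₀ (Real.sqrt_pos.2 hK), ← Real.sqrt_mul' _ hK.le]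
    exact Real.le_sqrt_of_sq_le
      ((D.norm_sq_le _).trans (hsize.half_le (D.energy_nonneg 0) hP true))
  rw [norm_bitileTerm, ← mul_assoc]
  exact mul_le_mul ha ((norm_sub_le _ _).trans (D.norm_timeHalf_add_le _)) (norm_nonneg _)
    (Real.sqrt_nonneg _)

theorem norm_bitileTerm_le_prod (D : FormData a B e) (hsize : ∀ i, SizeLE (e i) PP (s i))
    (hP : P ∈ PP) : ‖bitileTerm a B P‖ ≤ (∏ i, √(s i)) * 2 ^ P.k := by
  have hd := (D.sizeLE_sqrt_mul_sqrt hsize).half_le (fun _ => by positivity) hP false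
  calc ‖bitileTerm a B P‖ ≤ √(s 0) * (√(s 1) * √(s 2) * 2 ^ P.k) :=
        (D.norm_bitileTerm_le (hsize 0) hP).trans
          (mul_le_mul_of_nonneg_left hd (Real.sqrt_nonneg _))
    _ = (∏ i, √(s i)) * 2 ^ P.k := by
        rw [Fin.prod_univ_three]
        ring

theorem sum_norm_bitileTerm_upper_le (D : FormData a B e) (hsize : ∀ i, SizeLE (e i) PP (s i))
    (hT : T ∈ PP) :
    ∑ P ∈ PP with HalfLE true P T, ‖bitileTerm a B P‖ ≤ (∏ i, √(s i)) * 2 ^ T.k := by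
  calc ∑ P ∈ PP with HalfLE true P T, ‖bitileTerm a B P‖
      ≤ ∑ P ∈ PP with HalfLE true P T, √(s 0) * (√(e 1 P.d) * √(e 2 P.d)) :=
        Finset.sum_le_sum fun P hP => D.norm_bitileTerm_le (hsize 0) (Finset.mem_filter.1 hP).1
    _ ≤ √(s 0) * (√(s 1) * √(s 2) * 2 ^ T.k) := by
        rw [← Finset.mul_sum]
        exact mul_le_mul_of_nonneg_left (D.sizeLE_sqrt_mul_sqrt hsize true T hT)
          (Real.sqrt_nonneg _)
    _ = (∏ i, √(s i)) * 2 ^ T.k := by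
        rw [Fin.prod_univ_three]
        ring

theorem sum_sq_timeHalf_sub_le (D : FormData a B e) (hPP : (PP : Set Bitile).OrdConnected)
    (hsize : ∀ i, SizeLE (e i) PP (s i)) (hT : T ∈ PP) :
    ∑ P ∈ PP with HalfLE false P T,
      ((√(2 ^ P.k))⁻¹ * ‖B (P.d.timeHalf false) - B (P.d.timeHalf true)‖) ^ 2 ≤
      (4 * (√(s 1) * √(s 2))) ^ 2 * 2 ^ T.k := by
  have hsquare := sum_norm_sq_sub_le (fun _ => by positivity) D.splitAdditive
    D.norm_timeHalf_add_le hPP (by positivity) (D.sizeLE_sqrt_mul_sqrt hsize) hT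
  have hsubset : ({P ∈ PP | HalfLE false P T} : Finset Bitile) ⊆ {P ∈ PP | P ≤ T} :=
    Finset.monotone_filter_right _ fun _ _ h => h.le
  calc ∑ P ∈ PP with HalfLE false P T,
        ((√(2 ^ P.k))⁻¹ * ‖B (P.d.timeHalf false) - B (P.d.timeHalf true)‖) ^ 2
      = ∑ P ∈ PP with HalfLE false P T,
          ‖B ((nearHalf T P).timeHalf false) - B ((nearHalf T P).timeHalf true)‖ ^ 2 / 2 ^ P.k := by
        refine Finset.sum_congr rfl fun P hP => ?_
        rw [nearHalf, (Finset.mem_filter.1 hP).2.side_eq_false, mul_pow, inv_pow,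
          Real.sq_sqrt (by positivity), div_eq_inv_mul]
        rfl
    _ ≤ 12 * (√(s 1) * √(s 2)) ^ 2 * 2 ^ T.k :=
        (Finset.sum_le_sum_of_subset_of_nonneg hsubset fun _ _ _ => by positivity).trans hsquare
    _ ≤ (4 * (√(s 1) * √(s 2))) ^ 2 * 2 ^ T.k := by
        rw [mul_pow 4]
        gcongr
        norm_num

theorem sum_norm_bitileTerm_lower_le (D : FormData a B e)
    (hPP : (PP : Set Bitile).OrdConnected) (hsize : ∀ i, SizeLE (e i) PP (s i)) (hT : T ∈ PP) :
    ∑ P ∈ PP with HalfLE false P T, ‖bitileTerm a B P‖ ≤ 4 * (∏ i, √(s i)) * 2 ^ T.k := by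
  have ha : ∑ P ∈ PP with HalfLE false P T, ‖a P.u‖ ^ 2 ≤ s 0 * 2 ^ T.k :=
    (Finset.sum_le_sum fun P _ => D.norm_sq_le _).trans (hsize 0 false T hT)
  calc ∑ P ∈ PP with HalfLE false P T, ‖bitileTerm a B P‖
      ≤ √(∑ P ∈ PP with HalfLE false P T, ‖a P.u‖ ^ 2) *
          √(∑ P ∈ PP with HalfLE false P T,
            ((√(2 ^ P.k))⁻¹ * ‖B (P.d.timeHalf false) - B (P.d.timeHalf true)‖) ^ 2) := by
        simp only [norm_bitileTerm]
        exact Real.sum_mul_le_sqrt_mul_sqrt _ _ _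
    _ ≤ √(s 0 * 2 ^ T.k) * √((4 * (√(s 1) * √(s 2))) ^ 2 * 2 ^ T.k) := by
        gcongr
        exact D.sum_sq_timeHalf_sub_le hPP hsize hT
    _ = 4 * (∏ i, √(s i)) * 2 ^ T.k := by
        rw [sqrt_mul_mul_sqrt_mul _ _ (by positivity), Real.sqrt_sq (by positivity),
          Fin.prod_univ_three]
        ring

theorem norm_sum_tree_le (D : FormData a B e) (hPP : (PP : Set Bitile).OrdConnected)
    (hsize : ∀ i, SizeLE (e i) PP (s i)) (hT : T ∈ PP) :
    ‖∑ P ∈ PP with P ≤ T, bitileTerm a B P‖ ≤ 5 * (∏ i, √(s i)) * 2 ^ T.k := by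
  have hsubset : ({P ∈ PP | P ≤ T} : Finset Bitile) ⊆
      ({P ∈ PP | HalfLE false P T} : Finset Bitile) ∪ {P ∈ PP | HalfLE true P T} := fun P hP => by
    obtain ⟨hPPP, hPT⟩ := Finset.mem_filter.1 hP
    have hside := halfLE_side hPT
    simp only [Finset.mem_union, Finset.mem_filter]
    cases hb : side T P <;> rw [hb] at hside <;> tauto
  calc ‖∑ P ∈ PP with P ≤ T, bitileTerm a B P‖
      ≤ ∑ P ∈ PP with P ≤ T, ‖bitileTerm a B P‖ := _root_.norm_sum_le _ _
    _ ≤ ∑ P ∈ ({P ∈ PP | HalfLE false P T} : Finset Bitile) ∪ {P ∈ PP | HalfLE true P T},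
          ‖bitileTerm a B P‖ :=
        Finset.sum_le_sum_of_subset_of_nonneg hsubset fun _ _ _ => norm_nonneg _
    _ ≤ ∑ P ∈ PP with HalfLE false P T, ‖bitileTerm a B P‖ +
          ∑ P ∈ PP with HalfLE true P T, ‖bitileTerm a B P‖ := by
        rw [← Finset.sum_union_inter]
        exact le_add_of_nonneg_right (Finset.sum_nonneg fun _ _ => norm_nonneg _)
    _ ≤ 5 * (∏ i, √(s i)) * 2 ^ T.k := by
        linarith [D.sum_norm_bitileTerm_lower_le hPP hsize hT,
          D.sum_norm_bitileTerm_upper_le hsize hT]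

theorem norm_sum_le_removeTrees_add (D : FormData a B e) (hPP : (PP : Set Bitile).OrdConnected)
    (hsize : ∀ i, SizeLE (e i) PP (s i)) (h𝕋 : 𝕋 ⊆ PP) :
    ‖∑ P ∈ PP, bitileTerm a B P‖ ≤ ‖∑ P ∈ removeTrees PP 𝕋, bitileTerm a B P‖ +
      5 * (∏ i, √(s i)) * ∑ T ∈ 𝕋, 2 ^ T.k := by
  induction 𝕋 using Finset.induction_on with
  | empty => simp [removeTrees_empty]
  | insert T 𝕋 hT𝕋 ih =>
    obtain ⟨hT, h𝕋⟩ := Finset.insert_subset_iff.1 h𝕋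
    have hsub := removeTrees_subset PP 𝕋
    have htree : ‖∑ P ∈ removeTrees PP 𝕋 with P ≤ T, bitileTerm a B P‖ ≤
        5 * (∏ i, √(s i)) * 2 ^ T.k := by
      by_cases hTmem : T ∈ removeTrees PP 𝕋
      · exact D.norm_sum_tree_le (ordConnected_removeTrees hPP 𝕋)
          (fun i => (hsize i).mono (D.energy_nonneg i) hsub) hTmem
      · have hempty : ({P ∈ removeTrees PP 𝕋 | P ≤ T} : Finset Bitile) = ∅ :=
          Finset.filter_eq_empty_iff.2 fun P hP hPT => hTmem <| mem_removeTrees.2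
            ⟨hT, fun T' hT' hle => (mem_removeTrees.1 hP).2 T' hT' (hPT.trans hle)⟩
        rw [hempty, Finset.sum_empty, norm_zero]
        positivity
    have hsplit : ∑ P ∈ removeTrees PP 𝕋, bitileTerm a B P =
        ∑ P ∈ removeTrees PP 𝕋 with P ≤ T, bitileTerm a B P +
          ∑ P ∈ removeTrees PP (insert T 𝕋), bitileTerm a B P := by
      rw [Finset.insert_eq, Finset.union_comm, removeTrees_union,
        removeTrees_singleton, Finset.sum_filter_add_sum_filter_not]
    have hih := ih h𝕋
    rw [hsplit] at hih
    rw [Finset.sum_insert hT𝕋, mul_add]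
    linarith [norm_add_le (∑ P ∈ removeTrees PP 𝕋 with P ≤ T, bitileTerm a B P)
      (∑ P ∈ removeTrees PP (insert T 𝕋), bitileTerm a B P)]

theorem exists_tops_sum_le (D : FormData a B e) (hE : ∀ i, 0 < E i)
    (hB : ∀ i, BesselBound (e i) (E i)) (hτ : 0 < τ) (PP : Finset Bitile) :
    ∃ 𝕋 ⊆ PP, ∑ T ∈ 𝕋, (2 : ℝ) ^ T.k ≤ 24 / τ ∧
      ∀ i, SizeLE (e i) (removeTrees PP 𝕋) (E i * (τ / 4)) := by
  choose 𝕋 hsub hsum hsize using fun i => exists_tops_sizeLE (s := E i * (τ / 4))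
    (D.energy_nonneg i) (hB i) (by have := hE i; positivity) PP
  have hsum' : ∀ i, ∑ T ∈ 𝕋 i, (2 : ℝ) ^ T.k ≤ 8 / τ := fun i => by
    rw [le_div_iff₀ hτ]
    refine le_of_mul_le_mul_left ?_ (hE i)
    linarith [hsum i]
  refine ⟨𝕋 0 ∪ 𝕋 1 ∪ 𝕋 2, Finset.union_subset (Finset.union_subset (hsub 0) (hsub 1)) (hsub 2),
    ?_, fun i => (hsize i).mono (D.energy_nonneg i) (removeTrees_anti PP ?_)⟩
  · have htotal : 24 / τ = 8 / τ + 8 / τ + 8 / τ := by ring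
    linarith [sum_two_zpow_union_le (𝕋 0 ∪ 𝕋 1) (𝕋 2), sum_two_zpow_union_le (𝕋 0) (𝕋 1),
      hsum' 0, hsum' 1, hsum' 2]
  · fin_cases i <;> intro T hT <;> simp_all

theorem exists_ordConnected_sizeLE_quarter (D : FormData a B e) (hE : ∀ i, 0 < E i)
    (hB : ∀ i, BesselBound (e i) (E i)) (hPP : (PP : Set Bitile).OrdConnected) (hτ : 0 < τ)
    (hsize : ∀ i, SizeLE (e i) PP (E i * τ)) :
    ∃ QQ ⊆ PP, (QQ : Set Bitile).OrdConnected ∧ (∀ i, SizeLE (e i) QQ (E i * (τ / 4))) ∧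
      ‖∑ P ∈ PP, bitileTerm a B P‖ ≤
        ‖∑ P ∈ QQ, bitileTerm a B P‖ + 120 * (∏ i, √(E i)) * √τ := by
  obtain ⟨𝕋, hsub, hsum, hsize'⟩ := D.exists_tops_sum_le hE hB hτ PP
  refine ⟨removeTrees PP 𝕋, removeTrees_subset _ _, ordConnected_removeTrees hPP 𝕋, hsize', ?_⟩
  refine (D.norm_sum_le_removeTrees_add hPP hsize hsub).trans (add_le_add_right ?_ _)
  calc 5 * (∏ i, √(E i * τ)) * ∑ T ∈ 𝕋, (2 : ℝ) ^ T.k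
      ≤ 5 * ((∏ i, √(E i)) * √τ ^ 3) * (24 / τ) := by
        rw [prod_sqrt_mul E hτ.le]
        gcongr
    _ = 120 * (∏ i, √(E i)) * √τ := by
        rw [pow_succ, Real.sq_sqrt hτ.le]
        field_simp
        ring

theorem norm_sum_le_add_geometric (D : FormData a B e) (hE : ∀ i, 0 < E i)
    (hB : ∀ i, BesselBound (e i) (E i)) (m : ℕ) (hPP : (PP : Set Bitile).OrdConnected)
    (hτ : 0 < τ) (hsize : ∀ i, SizeLE (e i) PP (E i * τ)) :
    ‖∑ P ∈ PP, bitileTerm a B P‖ ≤ 240 * (∏ i, √(E i)) * √τ +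
      (∏ i, √(E i)) * √τ ^ 3 * (∑ P ∈ PP, 2 ^ P.k) * (1 / 2) ^ m := by
  induction m generalizing PP τ with
  | zero =>
    have hterm : ‖∑ P ∈ PP, bitileTerm a B P‖ ≤
        (∏ i, √(E i)) * √τ ^ 3 * ∑ P ∈ PP, 2 ^ P.k := by
      rw [← prod_sqrt_mul E hτ.le, Finset.mul_sum]
      exact (_root_.norm_sum_le _ _).trans
        (Finset.sum_le_sum fun P hP => D.norm_bitileTerm_le_prod hsize hP)
    rw [pow_zero, mul_one]
    exact hterm.trans (le_add_of_nonneg_left (by positivity))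
  | succ m ih =>
    obtain ⟨QQ, hsub, hQQ, hsize', hstep⟩ :=
      D.exists_ordConnected_sizeLE_quarter hE hB hPP hτ hsize
    have hsqrt : √(τ / 4) = √τ / 2 := by
      rw [Real.sqrt_div hτ.le, show (4 : ℝ) = 2 ^ 2 by norm_num, Real.sqrt_sq two_pos.le]
    have hih := ih hQQ (by positivity) hsize'
    rw [hsqrt] at hih
    have hgeometric : (∏ i, √(E i)) * (√τ / 2) ^ 3 * (∑ P ∈ QQ, 2 ^ P.k) * (1 / 2) ^ m ≤
        (∏ i, √(E i)) * √τ ^ 3 * (∑ P ∈ PP, 2 ^ P.k) * (1 / 2) ^ (m + 1) :=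
      calc _ ≤ (∏ i, √(E i)) * (√τ ^ 3 / 2) * (∑ P ∈ PP, 2 ^ P.k) * (1 / 2) ^ m := by
            gcongr
            rw [div_pow]
            gcongr
            norm_num
        _ = _ := by ring
    linarith

theorem norm_sum_le (D : FormData a B e) (hE : ∀ i, 0 < E i)
    (hB : ∀ i, BesselBound (e i) (E i)) (hPP : (PP : Set Bitile).OrdConnected) (hτ : 0 < τ)
    (hsize : ∀ i, SizeLE (e i) PP (E i * τ)) :
    ‖∑ P ∈ PP, bitileTerm a B P‖ ≤ 240 * (∏ i, √(E i)) * √τ := by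
  have hgeometric := (tendsto_pow_atTop_nhds_zero_of_lt_one (r := (1 / 2 : ℝ)) (by norm_num)
    (by norm_num)).const_mul ((∏ i, √(E i)) * √τ ^ 3 * ∑ P ∈ PP, 2 ^ P.k)
  have hlimit := ge_of_tendsto' (hgeometric.const_add (240 * (∏ i, √(E i)) * √τ))
    fun m => D.norm_sum_le_add_geometric hE hB m hPP hτ hsize
  rwa [mul_zero, add_zero] at hlimit

end FormData

/-! ### Walsh wave packets -/

theorem walsh_zero : walsh 0 = (Ico 0 1).indicator 1 := by
  ext x
  rw [walsh, dif_pos rfl, indicator_apply]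
  exact if_congr mem_Ico.symm rfl rfl

theorem indicator_Ico_two_mul_add (x : ℝ) :
    (Ico (0 : ℝ) 1).indicator (1 : ℝ → ℝ) (2 * x) + (Ico 0 1).indicator 1 (2 * x - 1) =
      (Ico 0 1).indicator 1 x := by
  simp only [indicator_apply, mem_Ico, Pi.one_apply]
  grind

theorem walsh_bit (b : Bool) (l : ℕ) (x : ℝ) :
    walsh (Nat.bit b l) x = walsh l (2 * x) + (-1) ^ b.toNat * walsh l (2 * x - 1) := by
  rcases b with _ | _
  · rcases Nat.eq_zero_or_pos l with rfl | hl
    · rw [show Nat.bit false 0 = 0 from rfl, walsh_zero, Bool.toNat_false, pow_zero, one_mul,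
        indicator_Ico_two_mul_add]
    · rw [walsh, dif_neg (by simp [Nat.bit_val]; omega), if_pos (by simp [Nat.bit_val]),
        Nat.bit_div_two, Bool.toNat_false, pow_zero, one_mul]
  · rw [walsh, dif_neg (by simp [Nat.bit_val]), if_neg (by simp [Nat.bit_val]), Nat.bit_div_two,
      Bool.toNat_true, pow_one, neg_one_mul, sub_eq_add_neg]

theorem walsh_sq (l : ℕ) (x : ℝ) : walsh l x ^ 2 = (Ico 0 1).indicator 1 x := by
  induction l using Nat.binaryRec generalizing x with
  | zero => rw [walsh_zero, indicator_apply]; split_ifs <;> simp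
  | bit b l ih =>
    have hproduct : walsh l (2 * x) * walsh l (2 * x - 1) = 0 := by
      rw [← sq_eq_zero_iff, mul_pow, ih, ih, indicator_apply, indicator_apply]
      simp only [mem_Ico]
      grind
    have hsign : ((-1 : ℝ) ^ b.toNat) ^ 2 = 1 := by rw [← pow_mul', Even.neg_one_pow (by simp)]
    rw [walsh_bit, add_sq, mul_pow, ih, ih, hsign, one_mul, ← indicator_Ico_two_mul_add x]
    linear_combination 2 * (-1) ^ b.toNat * hproduct

theorem measurable_walsh (l : ℕ) : Measurable (walsh l) := by
  induction l using Nat.binaryRec with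
  | zero => rw [walsh_zero]; exact measurable_one.indicator measurableSet_Ico
  | bit b l ih =>
    rw [funext (walsh_bit b l)]
    fun_prop

namespace Tile

variable {p q : Tile} {x : ℝ}

theorem mem_timeI : x ∈ p.timeI ↔ (2 : ℝ) ^ (-p.k) * x - p.n ∈ Ico (0 : ℝ) 1 := by
  have h : (0 : ℝ) < 2 ^ p.k := by positivity
  rw [timeI, mem_Ico, mem_Ico, zpow_neg, ← div_eq_inv_mul, sub_nonneg, le_div_iff₀' h,
    sub_lt_iff_lt_add', div_lt_iff₀' h]

theorem measurableSet_timeI (p : Tile) : MeasurableSet p.timeI := measurableSet_Ico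

theorem volume_timeI (p : Tile) : volume p.timeI = ENNReal.ofReal (2 ^ p.k) := by
  rw [timeI, Real.volume_Ico]
  ring_nf

theorem disjoint_timeI (hk : p.k = q.k) (hn : p.n ≠ q.n) : Disjoint p.timeI q.timeI := by
  refine disjoint_left.2 fun x hp hq => hn ?_
  rw [mem_timeI, mem_Ico] at hp hq
  rw [hk] at hp
  have hpq : (p.n : ℝ) < q.n + 1 := by linarith
  have hqp : (q.n : ℝ) < p.n + 1 := by linarith
  norm_cast at hpq hqp
  omega

theorem timeI_subset_of_div_eq {d : ℕ} (hk : q.k = p.k + d) (hn : p.n / 2 ^ d = q.n) :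
    p.timeI ⊆ q.timeI := by
  have hscale : (2 : ℝ) ^ q.k = 2 ^ p.k * 2 ^ d := by
    rw [hk, zpow_add₀ two_ne_zero, zpow_natCast]
  have hleft : 2 ^ d * q.n ≤ p.n := hn ▸ Nat.mul_div_le _ _
  have hright : p.n + 1 ≤ 2 ^ d * (q.n + 1) := hn ▸ Nat.lt_mul_div_succ _ (by positivity)
  rw [timeI, timeI, hscale, mul_assoc, mul_assoc]
  refine Ico_subset_Ico ?_ ?_ <;> gcongr <;> exact_mod_cast ‹_›

theorem wp_sq (p : Tile) (x : ℝ) :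
    p.wp x ^ 2 = p.timeI.indicator (fun _ => (2 : ℝ) ^ (-p.k)) x := by
  rw [wp, mul_pow, walsh_sq, Real.sq_sqrt (by positivity)]
  by_cases hx : x ∈ p.timeI
  · rw [indicator_of_mem hx, indicator_of_mem (mem_timeI.1 hx), Pi.one_apply, mul_one]
  · rw [indicator_of_notMem hx, indicator_of_notMem (mt mem_timeI.2 hx), mul_zero]

theorem wp_eq_zero (hx : x ∉ p.timeI) : p.wp x = 0 := by
  rw [← sq_eq_zero_iff, wp_sq, indicator_of_notMem hx]

theorem abs_wp_le (p : Tile) (x : ℝ) : |p.wp x| ≤ √(2 ^ (-p.k)) := by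
  refine Real.abs_le_sqrt ?_
  rw [wp_sq]
  exact indicator_le_self' (fun _ _ => by positivity) x

@[fun_prop]
theorem measurable_wp (p : Tile) : Measurable p.wp :=
  ((measurable_walsh p.l).comp (by fun_prop)).const_mul _

theorem wp_mul_wp_eq_zero (hk : p.k = q.k) (hn : p.n ≠ q.n) (x : ℝ) : p.wp x * q.wp x = 0 := by
  by_cases hx : x ∈ p.timeI
  · rw [wp_eq_zero ((disjoint_timeI hk hn).notMem_of_mem_left hx), mul_zero]
  · rw [wp_eq_zero hx, zero_mul]

theorem integrable_wp_sq (p : Tile) : Integrable fun x => p.wp x ^ 2 := by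
  simp only [wp_sq]
  refine (integrable_indicator_iff p.measurableSet_timeI).2 (integrableOn_const ?_)
  rw [volume_timeI]
  exact ofReal_ne_top

theorem integral_wp_sq (p : Tile) : ∫ x, p.wp x ^ 2 = 1 := by
  simp only [wp_sq]
  rw [integral_indicator p.measurableSet_timeI, setIntegral_const, measureReal_def,
    volume_timeI, toReal_ofReal (by positivity), smul_eq_mul, zpow_neg,
    mul_inv_cancel₀ (by positivity)]

theorem memLp_wp (p : Tile) : MemLp (fun x => (p.wp x : ℂ)) 2 :=
  MemLp.ofReal ((memLp_two_iff_integrable_sq p.measurable_wp.aestronglyMeasurable).2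
    p.integrable_wp_sq)

end Tile

namespace Bitile

theorem wp_half (b : Bool) (P : Bitile) (x : ℝ) :
    (P.half b).wp x = (P.left.wp x + (-1) ^ b.toNat * P.right.wp x) / √2 := by
  have hscale : √((2 : ℝ) ^ (-(P.k - 1))) = √2 * √(2 ^ (-P.k)) := by
    rw [← Real.sqrt_mul two_pos.le, neg_sub, sub_eq_add_neg, zpow_one_add₀ two_ne_zero]
  have hpoint : (2 : ℝ) ^ (-(P.k - 1)) = 2 * 2 ^ (-P.k) := by
    rw [neg_sub, sub_eq_add_neg, zpow_one_add₀ two_ne_zero]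
  rw [Tile.wp, Tile.wp, Tile.wp, half, left, right, ← Nat.bit_val, walsh_bit, hscale, hpoint,
    mul_sub, ← mul_assoc, sub_sub]
  push_cast
  field_simp

theorem left_le_half (b : Bool) (P : Bitile) : P.left ≤ P.half b := by
  have hb := b.toNat_lt
  exact ⟨1, by simp [left, half], by simp only [left, half]; omega,
    by simp only [left, half]; omega⟩

theorem right_le_half (b : Bool) (P : Bitile) : P.right ≤ P.half b := by
  have hb := b.toNat_lt
  exact ⟨1, by simp [right, half], by simp only [right, half]; omega,
    by simp only [right, half]; omega⟩

end Bitile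

/-- The wave packet `w_p` as an element of `L²`. -/
def wpL2 (p : Tile) : Lp ℂ 2 (volume : Measure ℝ) := p.memLp_wp.toLp

section Orthogonality

variable {p q : Tile}

theorem inner_wpL2 {f : ℝ → ℂ} (hf : MemLp f 2) (p : Tile) :
    inner ℂ (wpL2 p) (hf.toLp f) = coef f p := by
  rw [L2.inner_def, coef]
  refine integral_congr_ae ?_
  filter_upwards [p.memLp_wp.coeFn_toLp, hf.coeFn_toLp] with x hp hf
  rw [wpL2, hp, hf, RCLike.inner_apply, Complex.conj_ofReal]

theorem inner_wpL2_wpL2 (p q : Tile) :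
    inner ℂ (wpL2 p) (wpL2 q) = ((∫ x, q.wp x * p.wp x : ℝ) : ℂ) := by
  rw [wpL2, wpL2, ← wpL2, inner_wpL2, coef, ← integral_complex_ofReal]
  push_cast
  rfl

theorem inner_wpL2_self (p : Tile) : inner ℂ (wpL2 p) (wpL2 p) = 1 := by
  simp only [inner_wpL2_wpL2, ← sq, Tile.integral_wp_sq, Complex.ofReal_one]

theorem inner_wpL2_eq_zero_of_ne (hk : p.k = q.k) (hn : p.n ≠ q.n) :
    inner ℂ (wpL2 p) (wpL2 q) = 0 := by
  simp only [inner_wpL2_wpL2, Tile.wp_mul_wp_eq_zero hk.symm hn.symm, integral_zero,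
    Complex.ofReal_zero]

theorem wpL2_half (b : Bool) (P : Bitile) : wpL2 (P.half b) =
    ((√2)⁻¹ : ℝ) • (wpL2 P.left + ((-1) ^ b.toNat : ℝ) • wpL2 P.right) := by
  simp only [wpL2]
  rw [← MemLp.toLp_const_smul, ← MemLp.toLp_add, ← MemLp.toLp_const_smul]
  refine MemLp.toLp_congr _ _ (.of_forall fun x => ?_)
  simp only [wp_half, Pi.smul_apply, Pi.add_apply, Complex.real_smul]
  push_cast
  ring

theorem inner_wpL2_half (b b' : Bool) (k : ℤ) (n l l' : ℕ) :
    inner ℂ (wpL2 (half b ⟨k, n, l⟩)) (wpL2 (half b' ⟨k, n, l'⟩)) =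
      2⁻¹ * (inner ℂ (wpL2 (left ⟨k, n, l⟩)) (wpL2 (left ⟨k, n, l'⟩)) + (-1) ^ b.toNat *
        (-1) ^ b'.toNat * inner ℂ (wpL2 (right ⟨k, n, l⟩)) (wpL2 (right ⟨k, n, l'⟩))) := by
  have hleft_right : inner ℂ (wpL2 (left ⟨k, n, l⟩)) (wpL2 (right ⟨k, n, l'⟩)) = 0 :=
    inner_wpL2_eq_zero_of_ne rfl (by simp only [left, right]; omega)
  have hright_left : inner ℂ (wpL2 (right ⟨k, n, l⟩)) (wpL2 (left ⟨k, n, l'⟩)) = 0 :=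
    inner_wpL2_eq_zero_of_ne rfl (by simp only [left, right]; omega)
  have hsqrt : ((√2 : ℝ) : ℂ)⁻¹ * ((√2 : ℝ) : ℂ)⁻¹ = 2⁻¹ := by
    rw [← mul_inv, ← Complex.ofReal_mul, Real.mul_self_sqrt two_pos.le, Complex.ofReal_ofNat]
  rw [wpL2_half, wpL2_half]
  simp only [inner_smul_left_eq_smul, inner_smul_right_eq_smul, inner_add_left, inner_add_right,
    hleft_right, hright_left, Complex.real_smul]
  push_cast
  linear_combination (inner ℂ (wpL2 (left ⟨k, n, l⟩)) (wpL2 (left ⟨k, n, l'⟩)) + (-1) ^ b.toNat *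
        (-1) ^ b'.toNat * inner ℂ (wpL2 (right ⟨k, n, l⟩)) (wpL2 (right ⟨k, n, l'⟩))) * hsqrt

theorem inner_wpL2_eq_zero_of_freq_ne {m : ℕ} (k : ℤ) (n : ℕ) {l l' : ℕ} (hl : l < 2 ^ m)
    (hl' : l' < 2 ^ m) (hne : l ≠ l') : inner ℂ (wpL2 ⟨k, n, l⟩) (wpL2 ⟨k, n, l'⟩) = 0 := by
  induction m generalizing k n l l' with
  | zero => omega
  | succ m ih =>
    induction l using Nat.bitCasesOn with | bit b l => ?_
    induction l' using Nat.bitCasesOn with | bit b' l' => ?_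
    simp only [Nat.bit_val] at *
    refine (inner_wpL2_half b b' k n l l').trans ?_
    by_cases hll : l = l'
    · subst hll
      rw [inner_wpL2_self, inner_wpL2_self]
      cases b <;> cases b' <;> simp at hne ⊢
    · rw [left, left, right, right, ih _ _ (by omega) (by omega) hll,
        ih _ _ (by omega) (by omega) hll]
      simp

theorem inner_wpL2_eq_zero_of_not_le {d : ℕ} (hd : q.k = p.k + d) (h : ¬ p ≤ q) :
    inner ℂ (wpL2 p) (wpL2 q) = 0 := by
  induction d generalizing q with
  | zero =>
    obtain ⟨k, n, l⟩ := p
    obtain ⟨k', n', l'⟩ := q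
    obtain rfl : k' = k := by simpa using hd
    by_cases hn : n = n'
    · subst hn
      have hl : l ≠ l' := fun hl => h (hl ▸ le_rfl)
      exact inner_wpL2_eq_zero_of_freq_ne (m := max l l') _ _
        ((le_max_left _ _).trans_lt Nat.lt_two_pow_self)
        ((le_max_right _ _).trans_lt Nat.lt_two_pow_self) hl
    · exact inner_wpL2_eq_zero_of_ne rfl hn
  | succ d ih =>
    obtain ⟨b, Q, rfl⟩ : ∃ b Q, q = half b Q := ⟨q.l.bodd, ⟨q.k, q.n, q.l.div2⟩, by
      rw [half, add_comm, Nat.bodd_add_div2]⟩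
    have hscale : Q.k - 1 = p.k + d := by simp only [half] at hd; push_cast at hd; omega
    rw [wpL2_half, inner_smul_right_eq_smul, inner_add_right, inner_smul_right_eq_smul,
      ih (q := Q.left) hscale (mt (·.trans (left_le_half b Q)) h),
      ih (q := Q.right) hscale (mt (·.trans (right_le_half b Q)) h)]
    simp

theorem inner_wpL2_eq_zero (h : ¬ p ≤ q) (h' : ¬ q ≤ p) : inner ℂ (wpL2 p) (wpL2 q) = 0 := by
  rcases le_total p.k q.k with hk | hk
  · exact inner_wpL2_eq_zero_of_not_le (d := (q.k - p.k).toNat) (by omega) h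
  · exact inner_eq_zero_symm.1
      (inner_wpL2_eq_zero_of_not_le (d := (p.k - q.k).toNat) (by omega) h')

end Orthogonality

section Bessel

variable {f : ℝ → ℂ} {J : Set ℝ} {𝔭 : Finset Tile} {p : Tile}

theorem norm_toLp_sq (hf : MemLp f 2) : ‖hf.toLp f‖ ^ 2 = ∫ x, ‖f x‖ ^ 2 := by
  have hinner := inner_self_eq_norm_sq_to_K (𝕜 := ℂ) (hf.toLp f)
  rw [L2.inner_def] at hinner
  have hcomplex : ((‖hf.toLp f‖ ^ 2 : ℝ) : ℂ) = ((∫ x, ‖f x‖ ^ 2 : ℝ) : ℂ) := by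
    rw [← integral_complex_ofReal, Complex.ofReal_pow]
    refine hinner.symm.trans (integral_congr_ae ?_)
    filter_upwards [hf.coeFn_toLp] with x hx
    rw [hx, inner_self_eq_norm_sq_to_K]
    norm_cast
  exact_mod_cast hcomplex

theorem sum_norm_coef_sq_le (hf : MemLp f 2) (h𝔭 : IsAntichain (· ≤ ·) (𝔭 : Set Tile)) :
    ∑ p ∈ 𝔭, ‖coef f p‖ ^ 2 ≤ ∫ x, ‖f x‖ ^ 2 := by
  have horthonormal : Orthonormal ℂ fun p : 𝔭 => wpL2 p := by
    classical
    refine orthonormal_iff_ite.2 fun p q => ?_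
    split_ifs with hpq
    · rw [hpq, inner_wpL2_self]
    · have hne : (p : Tile) ≠ q := mt Subtype.ext hpq
      exact inner_wpL2_eq_zero (h𝔭 p.2 q.2 hne) (h𝔭 q.2 p.2 hne.symm)
  have hbessel := horthonormal.sum_inner_products_le (hf.toLp f) (s := Finset.univ)
  simp only [inner_wpL2] at hbessel
  rwa [← Finset.sum_coe_sort, ← norm_toLp_sq hf]

theorem coef_indicator (hJ : p.timeI ⊆ J) : coef (J.indicator f) p = coef f p := by
  refine integral_congr_ae (.of_forall fun x => ?_)
  by_cases hx : x ∈ p.timeI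
  · simp only [indicator_of_mem (hJ hx)]
  · simp only [Tile.wp_eq_zero hx, Complex.ofReal_zero, mul_zero]

theorem sum_norm_coef_sq_le_setIntegral (hf : MemLp f 2) (hJ : MeasurableSet J)
    (h𝔭 : IsAntichain (· ≤ ·) (𝔭 : Set Tile)) (hsub : ∀ p ∈ 𝔭, p.timeI ⊆ J) :
    ∑ p ∈ 𝔭, ‖coef f p‖ ^ 2 ≤ ∫ x in J, ‖f x‖ ^ 2 := by
  calc ∑ p ∈ 𝔭, ‖coef f p‖ ^ 2 = ∑ p ∈ 𝔭, ‖coef (J.indicator f) p‖ ^ 2 :=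
        Finset.sum_congr rfl fun p hp => by rw [coef_indicator (hsub p hp)]
    _ ≤ ∫ x, ‖J.indicator f x‖ ^ 2 := sum_norm_coef_sq_le (hf.indicator hJ) h𝔭
    _ = ∫ x in J, ‖f x‖ ^ 2 := by
        rw [← integral_indicator hJ]
        congr with x
        by_cases hx : x ∈ J <;> simp [hx]

theorem coef_half (hf : MemLp f 2) (b : Bool) (P : Bitile) :
    coef f (P.half b) = (coef f P.left + (-1) ^ b.toNat * coef f P.right) / (√2 : ℝ) := by
  simp only [← inner_wpL2 hf, wpL2_half, inner_smul_left_eq_smul, inner_add_left,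
    Complex.real_smul]
  push_cast
  ring

end Bessel

/-! ### Sums over dilated tiles -/

/-- The `r`-th tile, for `r < 2 ^ L`, of the tiling of the dilated tile `2^L p` by tiles whose
frequency interval has the length of that of `2^L p`. -/
def Tile.subtile (L : ℕ) (p : Tile) (r : ℕ) : Tile := ⟨p.k - L, 2 ^ L * p.n + r, p.l⟩

/-- The sum of `g` over the tiling of the dilated tile `2^L p` by subtiles. -/
def dilatedSum {A : Type*} [AddCommMonoid A] (L : ℕ) (g : Tile → A) (p : Tile) : A :=
  ∑ r ∈ Finset.range (2 ^ L), g (p.subtile L r)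

section DilatedSum

variable {A : Type*} [AddCommMonoid A] {g : Tile → A}

theorem dilatedSum_zero (g : Tile → A) : dilatedSum 0 g = g := by
  ext p
  simp [dilatedSum, Tile.subtile]

theorem dilatedSum_succ (L : ℕ) (g : Tile → A) (p : Tile) : dilatedSum (L + 1) g p =
    dilatedSum L g (p.timeHalf false) + dilatedSum L g (p.timeHalf true) := by
  have hsubtile : ∀ (c : Bool) (r : ℕ),
      p.subtile (L + 1) (c.toNat * 2 ^ L + r) = (p.timeHalf c).subtile L r := fun c r => by
    simp only [Tile.subtile, Tile.timeHalf, Tile.mk.injEq]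
    exact ⟨by push_cast; ring, by ring, trivial⟩
  simp only [dilatedSum, ← hsubtile, pow_succ, mul_two, Finset.sum_range_add, Bool.toNat_false,
    Bool.toNat_true, zero_mul, zero_add, one_mul]

theorem dilatedSum_succ_eq_add_freqHalves (hg : SplitAdditive g) (L : ℕ) (P : Bitile) :
    dilatedSum (L + 1) g ⟨P.k, P.n, P.l⟩ = dilatedSum L g P.d + dilatedSum L g P.u := by
  induction L generalizing P with
  | zero =>
    rw [dilatedSum_succ, dilatedSum_zero]
    exact (hg P).symm
  | succ L ih =>
    have hchild := fun c : Bool => ih ⟨P.k - 1, 2 * P.n + c.toNat, P.l⟩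
    rw [dilatedSum_succ (L + 1)]
    refine (congrArg₂ (· + ·) (hchild false) (hchild true)).trans ?_
    rw [dilatedSum_succ L g P.d, dilatedSum_succ L g P.u]
    exact add_add_add_comm _ _ _ _

theorem splitAdditive_dilatedSum (hg : SplitAdditive g) (L : ℕ) :
    SplitAdditive (dilatedSum L g) := fun P =>
  (dilatedSum_succ_eq_add_freqHalves hg L P).symm.trans (dilatedSum_succ L g _)

theorem sum_freq_eq_dilatedSum (hg : SplitAdditive g) (L : ℕ) (p : Tile) :
    ∑ m ∈ Finset.range (2 ^ L), g ⟨p.k, p.n, 2 ^ L * p.l + m⟩ = dilatedSum L g p := by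
  induction L generalizing p with
  | zero => simp [dilatedSum_zero]
  | succ L ih =>
    have hlower : ∀ m, 2 ^ (L + 1) * p.l + m = 2 ^ L * (2 * p.l) + m := fun m => by ring
    have hupper : ∀ m, 2 ^ (L + 1) * p.l + (2 ^ L + m) = 2 ^ L * (2 * p.l + 1) + m :=
      fun m => by ring
    rw [pow_succ 2 L, mul_two, Finset.sum_range_add, ← mul_two, ← pow_succ]
    simp only [hupper, hlower]
    exact (congrArg₂ (· + ·) (ih ⟨p.k, p.n, 2 * p.l⟩) (ih ⟨p.k, p.n, 2 * p.l + 1⟩)).trans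
      (dilatedSum_succ_eq_add_freqHalves hg L ⟨p.k, p.n, p.l⟩).symm

end DilatedSum

namespace Tile

variable {L r r' : ℕ} {p q : Tile}

theorem subtile_div (p : Tile) (hr : r < 2 ^ L) : (2 ^ L * p.n + r) / 2 ^ L = p.n := by
  rw [Nat.mul_add_div (by positivity), Nat.div_eq_of_lt hr, add_zero]

theorem le_of_subtile_le (hr : r < 2 ^ L) (hr' : r' < 2 ^ L)
    (h : p.subtile L r ≤ q.subtile L r') : p ≤ q := by
  obtain ⟨d, hk, hn, hl⟩ := le_iff.1 h
  simp only [subtile] at hk hn hl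
  refine le_iff.2 ⟨d, by omega, ?_, hl⟩
  rw [← p.subtile_div hr, Nat.div_div_eq_div_mul, mul_comm (2 ^ L) (2 ^ d),
    ← Nat.div_div_eq_div_mul, hn, q.subtile_div hr']

theorem eq_of_subtile_le_subtile (h : p.subtile L r ≤ p.subtile L r') : r = r' := by
  obtain ⟨d, hk, hn, -⟩ := le_iff.1 h
  simp only [subtile] at hk hn
  obtain rfl : d = 0 := by omega
  simpa using hn

theorem timeI_subtile_subset (p : Tile) (hr : r < 2 ^ L) : (p.subtile L r).timeI ⊆ p.timeI :=
  timeI_subset_of_div_eq (by simp [subtile]) (p.subtile_div hr)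

end Tile

theorem Bitile.timeI_subset_of_le {P Q : Bitile} (h : P ≤ Q) : P.timeI ⊆ Q.timeI := by
  obtain ⟨d, hk, hn, -⟩ := le_iff.1 h
  exact Tile.timeI_subset_of_div_eq (p := P.d) (q := Q.d) hk hn

/-- The energy `‖Π_{2^L p} f‖₂²` of `f` on the dilated tile `2^L p`. -/
def coefEnergy (L : ℕ) (f : ℝ → ℂ) : Tile → ℝ := dilatedSum L fun p => ‖coef f p‖ ^ 2

theorem coefEnergy_nonneg (L : ℕ) (f : ℝ → ℂ) (p : Tile) : 0 ≤ coefEnergy L f p := by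
  rw [coefEnergy, dilatedSum]
  positivity

section Energy

variable {f g : ℝ → ℂ} {J : Set ℝ} {𝔭 : Finset Tile} {PP : Finset Bitile} {s : ℝ}

theorem sum_coefEnergy_le_setIntegral (hf : MemLp f 2) (hJ : MeasurableSet J) (L : ℕ)
    (h𝔭 : IsAntichain (· ≤ ·) (𝔭 : Set Tile)) (hsub : ∀ p ∈ 𝔭, p.timeI ⊆ J) :
    ∑ p ∈ 𝔭, coefEnergy L f p ≤ ∫ x in J, ‖f x‖ ^ 2 := by
  classical
  set S := 𝔭 ×ˢ Finset.range (2 ^ L) with hS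
  have hlt : ∀ pr ∈ S, pr.1 ∈ 𝔭 ∧ pr.2 < 2 ^ L := fun pr hpr => by
    simpa only [hS, Finset.mem_product, Finset.mem_range] using hpr
  have heq : ∀ pr ∈ S, ∀ qr ∈ S, pr.1.subtile L pr.2 ≤ qr.1.subtile L qr.2 → pr = qr := by
    rintro ⟨p, r⟩ hpr ⟨q, r'⟩ hqr hle
    obtain rfl : p = q := h𝔭.eq (hlt _ hpr).1 (hlt _ hqr).1
      (Tile.le_of_subtile_le (hlt _ hpr).2 (hlt _ hqr).2 hle)
    exact congrArg (p, ·) (Tile.eq_of_subtile_le_subtile hle)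
  have hantichain : IsAntichain (· ≤ ·) (S.image fun pr => pr.1.subtile L pr.2 : Set Tile) := by
    rw [Finset.coe_image]
    rintro _ ⟨pr, hpr, rfl⟩ _ ⟨qr, hqr, rfl⟩ hne hle
    exact hne (by rw [heq pr hpr qr hqr hle])
  have hbessel := sum_norm_coef_sq_le_setIntegral hf hJ hantichain (by
    simp only [Finset.forall_mem_image]
    exact fun pr hpr =>
      (pr.1.timeI_subtile_subset (hlt pr hpr).2).trans (hsub _ (hlt pr hpr).1))
  rwa [Finset.sum_image fun pr hpr qr hqr h => heq pr hpr qr hqr h.le, hS,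
    Finset.sum_product] at hbessel

theorem besselBound_coefEnergy (hf : MemLp f 2) (L : ℕ) :
    BesselBound (coefEnergy L f) (∫ x, ‖f x‖ ^ 2) := fun 𝔭 h𝔭 => by
  rw [← setIntegral_univ]
  exact sum_coefEnergy_le_setIntegral hf .univ L h𝔭 fun p _ => subset_univ _

theorem sizeLE_coefEnergy (hf : MemLp f 2) (L : ℕ)
    (hs : ∀ P ∈ PP, ∫ x in P.timeI, ‖f x‖ ^ 2 ≤ s * 2 ^ P.k) : SizeLE (coefEnergy L f) PP s := by
  classical
  intro b T hT
  refine le_trans ?_ (hs T hT)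
  have hbessel := sum_coefEnergy_le_setIntegral hf (J := T.timeI) measurableSet_Ico L
    (𝔭 := {P ∈ PP | HalfLE b P T}.image (half !b)) ?_ ?_
  · rwa [Finset.sum_image fun _ _ _ _ h => half_injective _ h] at hbessel
  · rw [Finset.coe_image]
    rintro _ ⟨P, hP, rfl⟩ _ ⟨P', hP', rfl⟩ hne hle
    exact hne (by rw [eq_of_half_le_of_halfLE (Finset.mem_filter.1 hP).2
      (Finset.mem_filter.1 hP').2 hle])
  · simp only [Finset.forall_mem_image, Finset.mem_filter]
    exact fun P hP => Bitile.timeI_subset_of_le hP.2.le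

theorem splitAdditive_coef_mul_coef (hf : MemLp f 2) (hg : MemLp g 2) :
    SplitAdditive fun p => coef f p * coef g p := fun P => by
  have hsqrt : ((√2 : ℝ) : ℂ) * ((√2 : ℝ) : ℂ) = 2 := by
    rw [← Complex.ofReal_mul, Real.mul_self_sqrt two_pos.le, Complex.ofReal_ofNat]
  change coef f (P.half false) * coef g (P.half false) +
    coef f (P.half true) * coef g (P.half true) = _
  simp only [coef_half hf, coef_half hg, div_mul_div_comm, hsqrt, Bool.toNat_false,
    Bool.toNat_true]
  ring

theorem norm_dilatedSum_coef_mul_coef_le (L : ℕ) (p : Tile) :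
    ‖dilatedSum L (fun p => coef f p * coef g p) p‖ ≤
      dilatedSum L (fun p => ‖coef f p‖ * ‖coef g p‖) p := by
  simp only [dilatedSum, ← norm_mul]
  exact norm_sum_le _ _

end Energy

/-- The energies of the three functions in the form `Λ_{L+1}`. -/
def formEnergy (L : ℕ) (f : Fin 3 → ℝ → ℂ) (i : Fin 3) : Tile → ℝ :=
  coefEnergy ((![0, L + 1, L + 1] : Fin 3 → ℕ) i) (f i)

theorem formData_coef {f : Fin 3 → ℝ → ℂ} (hf : ∀ i, MemLp (f i) 2) (L : ℕ) :
    FormData (coef (f 0)) (dilatedSum L fun p => coef (f 1) p * coef (f 2) p)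
      (formEnergy L f) where
  energy_nonneg _ := coefEnergy_nonneg _ _
  norm_sq_le p := by
    change _ ≤ dilatedSum 0 (fun p => ‖coef (f 0) p‖ ^ 2) p
    rw [dilatedSum_zero]
  splitAdditive := splitAdditive_dilatedSum (splitAdditive_coef_mul_coef (hf 1) (hf 2)) L
  norm_timeHalf_add_le p := by
    refine (add_le_add (norm_dilatedSum_coef_mul_coef_le L _)
      (norm_dilatedSum_coef_mul_coef_le L _)).trans ?_
    rw [← dilatedSum_succ]
    exact Real.sum_mul_le_sqrt_mul_sqrt _ _ _

/-! ### The integrand of the form -/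

section MaximalTiles

variable {p q : Tile} {L : ℕ}

namespace Tile

theorem nonempty_timeI (p : Tile) : p.timeI.Nonempty :=
  nonempty_Ico.2 (by gcongr; exact lt_add_one _)

theorem nonempty_freqI (p : Tile) : p.freqI.Nonempty :=
  nonempty_Ico.2 (by gcongr; exact lt_add_one _)

theorem toSet_subset_prod_iff {I J : Set ℝ} :
    p.toSet ⊆ I ×ˢ J ↔ p.timeI ⊆ I ∧ p.freqI ⊆ J :=
  prod_subset_prod_iff.trans <| or_iff_left <|
    not_or.2 ⟨p.nonempty_timeI.ne_empty, p.nonempty_freqI.ne_empty⟩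

theorem scale_le_of_timeI_subset (h : p.timeI ⊆ q.timeI) : p.k ≤ q.k := by
  rw [timeI, timeI, Ico_subset_Ico_iff (nonempty_Ico.1 p.nonempty_timeI)] at h
  have hpow : (2 : ℝ) ^ p.k ≤ 2 ^ q.k := by linarith
  exact (zpow_le_zpow_iff_right₀ _root_.one_lt_two).1 hpow

theorem index_eq_of_timeI_subset (h : p.timeI ⊆ q.timeI) (hk : p.k = q.k) : p.n = q.n := by
  by_contra hn
  exact p.nonempty_timeI.ne_empty (disjoint_self.1 ((disjoint_timeI hk hn).mono_right h))

theorem eq_of_freqI_subset (h : q.freqI ⊆ p.freqI) (hk : p.k = q.k) : p.l = q.l := by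
  rw [freqI, freqI, hk, Ico_subset_Ico_iff (nonempty_Ico.1 q.nonempty_freqI),
    mul_le_mul_iff_right₀ (by positivity), mul_le_mul_iff_right₀ (by positivity)] at h
  exact_mod_cast le_antisymm h.1 (by linarith [h.2])

end Tile

/-- The frequency interval of the dilated tile `2^L q`. -/
def dilatedFreqI (L : ℕ) (q : Tile) : Set ℝ :=
  Ico (2 ^ (-q.k) * (2 ^ L * q.l : ℕ)) (2 ^ (-q.k) * (2 ^ L * (q.l + 1) : ℕ))

theorem dilate_toSet (L : ℕ) (q : Tile) : dilate L q.toSet = q.timeI ×ˢ dilatedFreqI L q := by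
  have himage : dilatedFreqI L q = (2 ^ L * ·) '' q.freqI := by
    rw [dilatedFreqI, Tile.freqI, image_mul_left_Ico (by positivity)]
    push_cast
    ring_nf
  rw [himage, dilate, Tile.toSet, ← image_id q.timeI, prod_image_image_eq, image_id]
  rfl

theorem freqI_subset_dilatedFreqI_iff (hk : p.k = q.k) :
    p.freqI ⊆ dilatedFreqI L q ↔ ∃ m < 2 ^ L, p.l = 2 ^ L * q.l + m := by
  have hsucc : (p.l : ℝ) + 1 = (p.l + 1 : ℕ) := by push_cast; rfl
  rw [Tile.freqI, dilatedFreqI, Ico_subset_Ico_iff (nonempty_Ico.1 p.nonempty_freqI), hk,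
    mul_le_mul_iff_right₀ (by positivity), mul_le_mul_iff_right₀ (by positivity), hsucc,
    Nat.cast_le, Nat.cast_le, mul_add, mul_one]
  constructor
  · rintro ⟨hle, hlt⟩
    exact ⟨p.l - 2 ^ L * q.l, by omega, by omega⟩
  · rintro ⟨m, hm, hl⟩
    omega

theorem exists_tile_freqI_subset (h : p.timeI ⊆ q.timeI) :
    ∃ q' : Tile, q'.k = q.k ∧ q'.n = q.n ∧ q'.freqI ⊆ p.freqI := by
  obtain ⟨d, hd⟩ := Int.le.dest (Tile.scale_le_of_timeI_subset h)
  refine ⟨⟨q.k, q.n, 2 ^ d * p.l⟩, rfl, rfl, ?_⟩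
  have hscale : (2 : ℝ) ^ (-p.k) = 2 ^ (-q.k) * 2 ^ d := by
    rw [← hd, ← zpow_natCast, ← zpow_add₀ two_ne_zero]
    ring_nf
  have hone : (1 : ℝ) ≤ 2 ^ d := one_le_pow₀ one_le_two
  rw [Tile.freqI, Tile.freqI, hscale, mul_assoc, mul_assoc]
  push_cast
  refine Ico_subset_Ico le_rfl ?_
  gcongr
  linarith

theorem mem_maxTiles_dilate_iff : p ∈ maxTiles (dilate L q.toSet) ↔
    ∃ m < 2 ^ L, ⟨q.k, q.n, 2 ^ L * q.l + m⟩ = p := by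
  rw [dilate_toSet, maxTiles, mem_ofPred_eq]
  simp only [Tile.toSet_subset_prod_iff]
  constructor
  · rintro ⟨⟨htime, hfreq⟩, hmax⟩
    obtain ⟨q', hk, hn, hq'⟩ := exists_tile_freqI_subset htime
    have htime' : q'.timeI = q.timeI := by rw [Tile.timeI, Tile.timeI, hk, hn]
    obtain rfl := hmax q' ⟨htime'.subset, hq'.trans hfreq⟩ ⟨htime.trans htime'.superset, hq'⟩
    obtain ⟨m, hm, hl⟩ := (freqI_subset_dilatedFreqI_iff hk).1 hfreq
    exact ⟨m, hm, by rw [← hk, ← hn, ← hl]⟩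
  · rintro ⟨m, hm, rfl⟩
    refine ⟨⟨subset_rfl, (freqI_subset_dilatedFreqI_iff (by rfl)).2 ⟨m, hm, rfl⟩⟩, ?_⟩
    rintro ⟨k, n, l⟩ ⟨htime, -⟩ ⟨htime', hfreq'⟩
    obtain rfl : k = q.k := le_antisymm (Tile.scale_le_of_timeI_subset htime)
      (Tile.scale_le_of_timeI_subset htime')
    obtain rfl : n = q.n := Tile.index_eq_of_timeI_subset htime rfl
    exact congrArg (Tile.mk q.k q.n) (Tile.eq_of_freqI_subset hfreq' rfl).symm

theorem piProj_dilate (L : ℕ) (q : Tile) (f : ℝ → ℂ) (x : ℝ) :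
    piProj (dilate L q.toSet) f x =
      ∑ m ∈ Finset.range (2 ^ L), projT ⟨q.k, q.n, 2 ^ L * q.l + m⟩ f x := by
  classical
  have htiles : maxTiles (dilate L q.toSet) =
      ((Finset.range (2 ^ L)).image fun m => ⟨q.k, q.n, 2 ^ L * q.l + m⟩ : Finset Tile) := by
    ext p
    simp only [mem_maxTiles_dilate_iff, Finset.coe_image, Finset.coe_range, mem_image, mem_Iio]
  rw [piProj, projSet, htiles, Finset.tsum_subtype' (f := fun p => projT p f x),
    Finset.sum_image fun m _ m' _ h => by simpa using h]

end MaximalTiles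

section Integrand

variable {f g : ℝ → ℂ} {x : ℝ}

theorem splitAdditive_projT (hf : MemLp f 2) (x : ℝ) : SplitAdditive fun p => projT p f x :=
  fun P => by
  have hsqrt : ((√2 : ℝ) : ℂ) * ((√2 : ℝ) : ℂ) = 2 := by
    rw [← Complex.ofReal_mul, Real.mul_self_sqrt two_pos.le, Complex.ofReal_ofNat]
  change projT (P.half false) f x + projT (P.half true) f x = _
  simp only [projT, coef_half hf, wp_half, Complex.ofReal_div, div_mul_div_comm, hsqrt,
    Bool.toNat_false, Bool.toNat_true]
  push_cast
  ring

theorem piProj_dilate_eq_dilatedSum (hf : MemLp f 2) (L : ℕ) (q : Tile) (x : ℝ) :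
    piProj (dilate L q.toSet) f x = dilatedSum L (fun p => projT p f x) q := by
  rw [piProj_dilate, ← sum_freq_eq_dilatedSum (splitAdditive_projT hf x)]

/-- The pointwise density whose integral is the coefficient product `⟨f, w_p⟩ ⟨g, w_p⟩`. -/
def coefMulDensity (f g : ℝ → ℂ) (x : ℝ) (p : Tile) : ℂ :=
  coef f p * coef g p * (p.wp x ^ 2 : ℝ)

theorem dilatedSum_projT_mul (f g : ℝ → ℂ) (L : ℕ) (q : Tile) (x : ℝ) :
    dilatedSum L (fun p => projT p f x) q * dilatedSum L (fun p => projT p g x) q =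
      dilatedSum L (coefMulDensity f g x) q := by
  simp only [dilatedSum, Finset.sum_mul_sum]
  refine Finset.sum_congr rfl fun r hr => ?_
  have hoffdiag : ∀ r' ∈ Finset.range (2 ^ L), r' ≠ r →
      projT (q.subtile L r) f x * projT (q.subtile L r') g x = 0 := fun r' _ hne => by
    have hindex : (q.subtile L r).n ≠ (q.subtile L r').n := by simp only [Tile.subtile]; omega
    rw [projT, projT, mul_mul_mul_comm, ← Complex.ofReal_mul,
      Tile.wp_mul_wp_eq_zero (by rfl) hindex, Complex.ofReal_zero, mul_zero]
  rw [Finset.sum_eq_single_of_mem r hr hoffdiag, projT, projT, coefMulDensity]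
  push_cast
  ring

theorem dilatedSum_coefMulDensity_eq_zero {q : Tile} (hx : x ∉ q.timeI) (L : ℕ) :
    dilatedSum L (coefMulDensity f g x) q = 0 :=
  Finset.sum_eq_zero fun r hr => by
    rw [coefMulDensity, Tile.wp_eq_zero fun h =>
      hx (q.timeI_subtile_subset (Finset.mem_range.1 hr) h)]
    simp

theorem phid_mul_wp_u (P : Bitile) (x : ℝ) : P.phid x * P.u.wp x =
    (√(2 ^ P.k))⁻¹ * (P.left.timeI.indicator 1 x - P.right.timeI.indicator 1 x) := by
  have hwp_sq : ∀ p : Tile, p.k = P.k - 1 →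
      p.wp x ^ 2 = 2 * (√(2 ^ P.k))⁻¹ ^ 2 * p.timeI.indicator 1 x := fun p hp => by
    rw [Tile.wp_sq, hp, inv_pow, Real.sq_sqrt (by positivity), neg_sub, sub_eq_add_neg,
      zpow_one_add₀ two_ne_zero, zpow_neg]
    by_cases hx : x ∈ p.timeI <;> simp [hx]
  change √(2 ^ P.k) * (P.half false).wp x * (P.half true).wp x = _
  rw [wp_half, wp_half, mul_assoc, div_mul_div_comm, Real.mul_self_sqrt two_pos.le,
    Bool.toNat_false, Bool.toNat_true, pow_zero, pow_one, one_mul, neg_one_mul, ← sub_eq_add_neg,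
    ← sq_sub_sq, hwp_sq _ rfl, hwp_sq _ rfl]
  field_simp

/-- The integrand of the form `Λ_L` that belongs to a single bitile. -/
def integrand (L : ℕ) (f : Fin 3 → ℝ → ℂ) (P : Bitile) (x : ℝ) : ℂ :=
  P.phid x * projT P.u (f 0) x * piProj (dilate L P.d.toSet) (f 1) x *
    piProj (dilate L P.d.toSet) (f 2) x

theorem quartileForm_eq_integral (L N : ℕ) (f : Fin 3 → ℝ → ℂ) :
    quartileForm L N (f 0) (f 1) (f 2) = ∫ x, ∑' P : stripBitiles N, integrand L f P x := rfl

theorem indicator_sub_mul_dilatedSum (L : ℕ) (P : Bitile) (x : ℝ) :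
    ((P.left.timeI.indicator 1 x - P.right.timeI.indicator 1 x : ℝ) : ℂ) *
        dilatedSum (L + 1) (coefMulDensity f g x) P.d =
      dilatedSum L (coefMulDensity f g x) (P.d.timeHalf false) -
        dilatedSum L (coefMulDensity f g x) (P.d.timeHalf true) := by
  have hdisjoint : Disjoint P.left.timeI P.right.timeI :=
    Tile.disjoint_timeI rfl (by simp only [left, right]; omega)
  have hleft : x ∉ P.left.timeI → dilatedSum L (coefMulDensity f g x) (P.d.timeHalf false) = 0 :=
    fun h => dilatedSum_coefMulDensity_eq_zero (q := P.d.timeHalf false) h L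
  have hright : x ∉ P.right.timeI → dilatedSum L (coefMulDensity f g x) (P.d.timeHalf true) = 0 :=
    fun h => dilatedSum_coefMulDensity_eq_zero (q := P.d.timeHalf true) h L
  rw [dilatedSum_succ]
  by_cases hl : x ∈ P.left.timeI
  · have hr := hdisjoint.notMem_of_mem_left hl
    simp [hl, hr, hright hr]
  · by_cases hr : x ∈ P.right.timeI
    · simp [hl, hr, hleft hl]
    · simp [hleft hl, hright hr]

theorem integrand_eq_bitileTerm {f : Fin 3 → ℝ → ℂ} (hf : ∀ i, MemLp (f i) 2) (L : ℕ)
    (P : Bitile) (x : ℝ) : integrand (L + 1) f P x =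
      bitileTerm (coef (f 0)) (dilatedSum L (coefMulDensity (f 1) (f 2) x)) P := by
  rw [integrand, piProj_dilate_eq_dilatedSum (hf 1), piProj_dilate_eq_dilatedSum (hf 2),
    mul_assoc, dilatedSum_projT_mul, projT, mul_left_comm, ← Complex.ofReal_mul, phid_mul_wp_u,
    bitileTerm, ← indicator_sub_mul_dilatedSum, Complex.ofReal_mul]
  ring

end Integrand

/-! ### Summation over the strip -/

section Integral

theorem integrable_coefMulDensity (f g : ℝ → ℂ) (p : Tile) :
    Integrable fun x => coefMulDensity f g x p :=
  p.integrable_wp_sq.ofReal.const_mul _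

theorem integrable_dilatedSum_coefMulDensity (f g : ℝ → ℂ) (L : ℕ) (q : Tile) :
    Integrable fun x => dilatedSum L (coefMulDensity f g x) q :=
  integrable_finsetSum _ fun _ _ => integrable_coefMulDensity f g _

theorem integral_dilatedSum_coefMulDensity (f g : ℝ → ℂ) (L : ℕ) (q : Tile) :
    ∫ x, dilatedSum L (coefMulDensity f g x) q = dilatedSum L (fun p => coef f p * coef g p) q := by
  simp only [dilatedSum]
  rw [integral_finsetSum _ fun _ _ => integrable_coefMulDensity f g _]
  refine Finset.sum_congr rfl fun r _ => ?_
  simp only [coefMulDensity]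
  rw [integral_const_mul, integral_complex_ofReal, Tile.integral_wp_sq, Complex.ofReal_one, mul_one]

theorem integral_norm_dilatedSum_coefMulDensity_le (f g : ℝ → ℂ) (L : ℕ) (q : Tile) :
    ∫ x, ‖dilatedSum L (coefMulDensity f g x) q‖ ≤
      dilatedSum L (fun p => ‖coef f p‖ * ‖coef g p‖) q := by
  have hnorm : ∀ p, ∫ x, ‖coefMulDensity f g x p‖ = ‖coef f p‖ * ‖coef g p‖ := fun p => by
    simp only [coefMulDensity, norm_mul, Complex.norm_real, Real.norm_of_nonneg (sq_nonneg _)]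
    rw [integral_const_mul, Tile.integral_wp_sq, mul_one]
  simp only [dilatedSum, ← hnorm]
  rw [← integral_finsetSum _ fun _ _ => (integrable_coefMulDensity f g _).norm]
  exact integral_mono (integrable_dilatedSum_coefMulDensity f g L q).norm
    (integrable_finsetSum _ fun _ _ => (integrable_coefMulDensity f g _).norm)
    fun x => norm_sum_le _ _

theorem dilatedSum_norm_mul_norm_le (f g : ℝ → ℂ) (L : ℕ) (q : Tile) :
    dilatedSum L (fun p => ‖coef f p‖ * ‖coef g p‖) q ≤ coefEnergy L f q + coefEnergy L g q := by
  simp only [coefEnergy, dilatedSum]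
  rw [← Finset.sum_add_distrib]
  refine Finset.sum_le_sum fun r _ => ?_
  nlinarith [two_mul_le_add_sq ‖coef f (q.subtile L r)‖ ‖coef g (q.subtile L r)‖,
    mul_nonneg (norm_nonneg (coef f (q.subtile L r))) (norm_nonneg (coef g (q.subtile L r)))]

theorem integral_norm_timeHalf_sub_le (f g : ℝ → ℂ) (L : ℕ) (q : Tile) :
    ∫ x, ‖dilatedSum L (coefMulDensity f g x) (q.timeHalf false) -
        dilatedSum L (coefMulDensity f g x) (q.timeHalf true)‖ ≤
      coefEnergy (L + 1) f q + coefEnergy (L + 1) g q := by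
  have hint := integrable_dilatedSum_coefMulDensity f g L
  calc
    _ ≤ ∫ x, (‖dilatedSum L (coefMulDensity f g x) (q.timeHalf false)‖ +
          ‖dilatedSum L (coefMulDensity f g x) (q.timeHalf true)‖) :=
        integral_mono ((hint _).sub (hint _)).norm ((hint _).norm.add (hint _).norm)
          fun x => norm_sub_le _ _
    _ ≤ dilatedSum (L + 1) (fun p => ‖coef f p‖ * ‖coef g p‖) q := by
        rw [integral_add (hint _).norm (hint _).norm, dilatedSum_succ]
        gcongr <;> exact integral_norm_dilatedSum_coefMulDensity_le f g L _
    _ ≤ _ := dilatedSum_norm_mul_norm_le f g (L + 1) q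

theorem norm_coef_le {f : ℝ → ℂ} (hf : Integrable f) (p : Tile) :
    ‖coef f p‖ ≤ √(2 ^ (-p.k)) * ∫ x, ‖f x‖ := by
  rw [coef, ← integral_const_mul]
  refine norm_integral_le_of_norm_le (hf.norm.const_mul _) (.of_forall fun x => ?_)
  rw [norm_mul, Complex.norm_real, mul_comm]
  gcongr
  exact p.abs_wp_le x

end Integral

section IntegralOfIntegrand

variable {f : Fin 3 → ℝ → ℂ}

theorem integrable_integrand (hf : ∀ i, MemLp (f i) 2) (L : ℕ) (P : Bitile) :
    Integrable (integrand (L + 1) f P) := by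
  rw [funext (integrand_eq_bitileTerm hf L P)]
  exact ((integrable_dilatedSum_coefMulDensity _ _ _ _).sub
    (integrable_dilatedSum_coefMulDensity _ _ _ _)).const_mul _

theorem integral_integrand (hf : ∀ i, MemLp (f i) 2) (L : ℕ) (P : Bitile) :
    ∫ x, integrand (L + 1) f P x =
      bitileTerm (coef (f 0)) (dilatedSum L fun p => coef (f 1) p * coef (f 2) p) P := by
  simp only [integrand_eq_bitileTerm hf, bitileTerm]
  rw [integral_const_mul, integral_sub (integrable_dilatedSum_coefMulDensity _ _ _ _)
    (integrable_dilatedSum_coefMulDensity _ _ _ _), integral_dilatedSum_coefMulDensity,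
    integral_dilatedSum_coefMulDensity]

theorem integral_norm_integrand_le (hf : ∀ i, MemLp (f i) 2) (hf₀ : Integrable (f 0)) (L : ℕ)
    (P : Bitile) : ∫ x, ‖integrand (L + 1) f P x‖ ≤ (∫ x, ‖f 0 x‖) *
      (2 ^ (-P.k) * coefEnergy (L + 1) (f 1) P.d + 2 ^ (-P.k) * coefEnergy (L + 1) (f 2) P.d) := by
  have hscale : √((2 : ℝ) ^ (-P.k)) * (√(2 ^ P.k))⁻¹ = 2 ^ (-P.k) := by
    rw [zpow_neg, Real.sqrt_inv, ← mul_inv, Real.mul_self_sqrt (by positivity)]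
  simp only [integrand_eq_bitileTerm hf, norm_bitileTerm]
  rw [integral_const_mul, integral_const_mul]
  calc
    _ ≤ (√(2 ^ (-P.k)) * ∫ x, ‖f 0 x‖) * ((√(2 ^ P.k))⁻¹ *
          (coefEnergy (L + 1) (f 1) P.d + coefEnergy (L + 1) (f 2) P.d)) := by
        gcongr
        · exact norm_coef_le hf₀ P.u
        · exact integral_norm_timeHalf_sub_le _ _ L P.d
    _ = (∫ x, ‖f 0 x‖) * (√(2 ^ (-P.k)) * (√(2 ^ P.k))⁻¹ *
          (coefEnergy (L + 1) (f 1) P.d + coefEnergy (L + 1) (f 2) P.d)) := by ring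
    _ = _ := by rw [hscale, mul_add]

end IntegralOfIntegrand

section Strip

variable {N : ℕ} {P : Bitile} {e : Tile → ℝ} {B : ℝ}

theorem Tile.eq_of_le_of_scale_eq {p q : Tile} (h : p ≤ q) (hk : p.k = q.k) : p = q := by
  obtain ⟨d, hd, hn, hl⟩ := Tile.le_iff.1 h
  obtain rfl : d = 0 := by omega
  cases p; cases q
  simp_all

theorem BesselBound.nonneg (he : BesselBound e B) : 0 ≤ B := by
  simpa using he ∅ (by simp)

theorem BesselBound.sum_d_le (he : BesselBound e B) {s : Finset Bitile} {k : ℤ}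
    (hs : ∀ P ∈ s, P.k = k) : ∑ P ∈ s, e P.d ≤ B := by
  classical
  rw [← Finset.sum_image (g := d) (f := e) (half_injective false).injOn]
  refine he _ fun p hp q hq hne hle => hne ?_
  obtain ⟨P, hP, rfl⟩ := Finset.mem_image.1 hp
  obtain ⟨Q, hQ, rfl⟩ := Finset.mem_image.1 hq
  exact Tile.eq_of_le_of_scale_eq hle ((hs P hP).trans (hs Q hQ).symm)

theorem mem_stripBitiles_iff :
    P ∈ stripBitiles N ↔ (2 : ℝ) ^ (1 - P.k) * (P.l + 1) ≤ 2 ^ N := by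
  change Ico _ _ ⊆ Ico _ _ ↔ _
  rw [Ico_subset_Ico_iff (by gcongr; exact lt_add_one _)]
  exact and_iff_right (by positivity)

theorem one_sub_le_scale (hP : P ∈ stripBitiles N) : 1 - N ≤ P.k := by
  have hpow : (2 : ℝ) ^ (1 - P.k) ≤ 2 ^ (N : ℤ) := by
    rw [zpow_natCast]
    exact (le_mul_of_one_le_right (by positivity) (le_add_of_nonneg_left P.l.cast_nonneg)).trans
      (mem_stripBitiles_iff.1 hP)
  have := (zpow_le_zpow_iff_right₀ _root_.one_lt_two).1 hpow
  omega

theorem sum_two_zpow_neg_le {b : ℤ} {K : Finset ℤ} (hK : ∀ k ∈ K, b ≤ k) :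
    ∑ k ∈ K, (2 : ℝ) ^ (-k) ≤ 2 ^ (1 - b) := by
  have hinj : InjOn (fun k => (k - b).toNat) K := fun k hk k' hk' h => by
    have := hK k hk
    have := hK k' hk'
    simp only at h
    omega
  have hterm : ∀ k ∈ K, (2 : ℝ) ^ (-k) = 2 ^ (-b) * (1 / 2) ^ (k - b).toNat := fun k hk => by
    rw [one_div, inv_pow, ← zpow_natCast, ← zpow_neg, ← zpow_add₀ two_ne_zero,
      Int.toNat_of_nonneg (sub_nonneg.2 (hK k hk))]
    ring_nf
  calc ∑ k ∈ K, (2 : ℝ) ^ (-k)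
      = 2 ^ (-b) * ∑ m ∈ K.image fun k => (k - b).toNat, (1 / 2 : ℝ) ^ m := by
        rw [Finset.sum_congr rfl hterm, ← Finset.mul_sum, Finset.sum_image hinj]
    _ ≤ 2 ^ (-b) * 2 := by
        gcongr
        exact (summable_geometric_two.sum_le_tsum _ fun _ _ => by positivity).trans_eq
          tsum_geometric_two
    _ = 2 ^ (1 - b) := by rw [sub_eq_neg_add, zpow_add_one₀ two_ne_zero]

theorem BesselBound.sum_strip_le (he : BesselBound e B) {s : Finset Bitile}
    (hs : (s : Set Bitile) ⊆ stripBitiles N) : ∑ P ∈ s, 2 ^ (-P.k) * e P.d ≤ 2 ^ N * B := by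
  calc ∑ P ∈ s, (2 : ℝ) ^ (-P.k) * e P.d
      = ∑ k ∈ s.image Bitile.k, ∑ P ∈ s with P.k = k, 2 ^ (-P.k) * e P.d :=
        (Finset.sum_fiberwise_of_maps_to (fun P hP => Finset.mem_image_of_mem _ hP) _).symm
    _ ≤ ∑ k ∈ s.image Bitile.k, 2 ^ (-k) * B := Finset.sum_le_sum fun k _ => by
        rw [Finset.sum_congr rfl fun P hP => by rw [(Finset.mem_filter.1 hP).2], ← Finset.mul_sum]
        gcongr
        exact he.sum_d_le fun P hP => (Finset.mem_filter.1 hP).2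
    _ ≤ 2 ^ (1 - (1 - N) : ℤ) * B := by
        rw [← Finset.sum_mul]
        refine mul_le_mul_of_nonneg_right (sum_two_zpow_neg_le fun k hk => ?_) he.nonneg
        obtain ⟨P, hP, rfl⟩ := Finset.mem_image.1 hk
        exact one_sub_le_scale (hs hP)
    _ = 2 ^ N * B := by rw [_root_.sub_sub_cancel, zpow_natCast]

instance : Countable Bitile :=
  Function.Injective.countable (f := fun P : Bitile => (P.k, P.n, P.l)) fun ⟨_, _, _⟩ ⟨_, _, _⟩ h =>
    by simp_all

end Strip

section Form

variable {f : Fin 3 → ℝ → ℂ}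

theorem summable_integral_norm_integrand (hf : ∀ i, MemLp (f i) 2) (hf₀ : Integrable (f 0))
    (L N : ℕ) : Summable fun P : stripBitiles N => ∫ x, ‖integrand (L + 1) f P x‖ := by
  refine summable_of_sum_le
    (c := (∫ x, ‖f 0 x‖) * (2 ^ N * (∫ x, ‖f 1 x‖ ^ 2) + 2 ^ N * ∫ x, ‖f 2 x‖ ^ 2))
    (fun P => integral_nonneg fun x => norm_nonneg _) fun s => ?_
  have hstrip : (s.map (Function.Embedding.subtype _) : Set Bitile) ⊆ stripBitiles N := by
    simp
  refine (Finset.sum_map s (Function.Embedding.subtype _)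
    fun P => ∫ x, ‖integrand (L + 1) f P x‖).symm.trans_le <|
    (Finset.sum_le_sum fun P _ => integral_norm_integrand_le hf hf₀ L P).trans ?_
  rw [← Finset.mul_sum, Finset.sum_add_distrib]
  gcongr
  · exact (besselBound_coefEnergy (hf 1) _).sum_strip_le hstrip
  · exact (besselBound_coefEnergy (hf 2) _).sum_strip_le hstrip

theorem hasSum_quartileForm (hf : ∀ i, MemLp (f i) 2) (hf₀ : Integrable (f 0)) (L N : ℕ) :
    HasSum (fun P : stripBitiles N =>
        bitileTerm (coef (f 0)) (dilatedSum L fun p => coef (f 1) p * coef (f 2) p) P)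
      (quartileForm (L + 1) N (f 0) (f 1) (f 2)) := by
  rw [quartileForm_eq_integral]
  simpa only [integral_integrand hf] using hasSum_integral_of_summable_integral_norm
    (F := fun P : stripBitiles N => integrand (L + 1) f P)
    (fun P => integrable_integrand hf L P) (summable_integral_norm_integrand hf hf₀ L N)

theorem norm_le_of_hasSum_of_cofinal {ι E : Type*} [SeminormedAddCommGroup E] {S : Set ι}
    {F : ι → E} {a : E} {C : ℝ} (h : HasSum (fun i : S => F i) a)
    (hC : ∀ s : Finset ι, (s : Set ι) ⊆ S →
      ∃ t : Finset ι, s ⊆ t ∧ (t : Set ι) ⊆ S ∧ ‖∑ i ∈ t, F i‖ ≤ C) : ‖a‖ ≤ C := by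
  classical
  refine le_of_tendsto_of_frequently h.norm ?_
  rw [SummationFilter.unconditional_filter, Filter.frequently_atTop]
  intro s
  obtain ⟨t, hst, htS, ht⟩ := hC (s.map (Function.Embedding.subtype _)) (by simp)
  refine ⟨t.subtype (· ∈ S), fun i hi => ?_, ?_⟩
  · exact Finset.mem_subtype.2 (hst (Finset.mem_map_of_mem _ hi))
  · rwa [Finset.sum_subtype_of_mem _ htS]

end Form

section FormBound

variable {f : Fin 3 → ℝ → ℂ}

theorem coef_eq_zero {g : ℝ → ℂ} {p : Tile} (hg : ∀ᵐ x, x ∈ p.timeI → g x = 0) :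
    coef g p = 0 := by
  refine integral_eq_zero_of_ae ?_
  filter_upwards [hg] with x hx
  by_cases hxp : x ∈ p.timeI
  · simp [hx hxp]
  · simp [Tile.wp_eq_zero hxp]

theorem dilatedSum_coef_mul_coef_eq_zero {g h : ℝ → ℂ} {p : Tile} (L : ℕ)
    (hgh : (∀ᵐ x, x ∈ p.timeI → g x = 0) ∨ ∀ᵐ x, x ∈ p.timeI → h x = 0) :
    dilatedSum L (fun q => coef g q * coef h q) p = 0 := by
  refine Finset.sum_eq_zero fun r hr => mul_eq_zero.2 ?_
  have hsub := p.timeI_subtile_subset (Finset.mem_range.1 hr)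
  exact hgh.imp (fun hg => coef_eq_zero (hg.mono fun x hx hxr => hx (hsub hxr)))
    fun hh => coef_eq_zero (hh.mono fun x hx hxr => hx (hsub hxr))

theorem Tile.timeI_timeHalf_subset (p : Tile) (c : Bool) : (p.timeHalf c).timeI ⊆ p.timeI := by
  have hc := c.toNat_lt
  refine Tile.timeI_subset_of_div_eq (d := 1) (by simp [Tile.timeHalf]) ?_
  simp only [Tile.timeHalf]
  omega

theorem bitileTerm_coef_eq_zero {P : Bitile} {j : Fin 3} (L : ℕ)
    (hj : ∀ᵐ x, x ∈ P.timeI → f j x = 0) :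
    bitileTerm (coef (f 0)) (dilatedSum L fun p => coef (f 1) p * coef (f 2) p) P = 0 := by
  have hhalf : ∀ c, ∀ᵐ x, x ∈ (P.d.timeHalf c).timeI → f j x = 0 := fun c =>
    hj.mono fun x hx hxc => hx (P.d.timeI_timeHalf_subset c hxc)
  obtain rfl | rfl | rfl : j = 0 ∨ j = 1 ∨ j = 2 := by omega
  · rw [bitileTerm, coef_eq_zero (p := P.u) hj, zero_mul, zero_mul]
  · rw [bitileTerm, dilatedSum_coef_mul_coef_eq_zero L (.inl (hhalf false)),
      dilatedSum_coef_mul_coef_eq_zero L (.inl (hhalf true)), sub_zero, mul_zero]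
  · rw [bitileTerm, dilatedSum_coef_mul_coef_eq_zero L (.inr (hhalf false)),
      dilatedSum_coef_mul_coef_eq_zero L (.inr (hhalf true)), sub_zero, mul_zero]

theorem quartileForm_eq_zero (hf : ∀ i, MemLp (f i) 2) (hf₀ : Integrable (f 0)) (L N : ℕ)
    {i : Fin 3} (hi : f i =ᵐ[volume] 0) : quartileForm (L + 1) N (f 0) (f 1) (f 2) = 0 := by
  refine (hasSum_quartileForm hf hf₀ L N).unique ?_
  simp only [bitileTerm_coef_eq_zero L (hi.mono fun _ hx _ => hx)]
  exact hasSum_zero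

theorem isUpperSet_stripBitiles (N : ℕ) : IsUpperSet (stripBitiles N) := by
  intro P Q hPQ hP
  obtain ⟨d, hk, -, hl⟩ := Bitile.le_iff.1 hPQ
  rw [mem_stripBitiles_iff] at hP ⊢
  refine le_trans ?_ hP
  have hscale : (2 : ℝ) ^ (1 - P.k) = 2 ^ (1 - Q.k) * 2 ^ d := by
    rw [hk, ← zpow_natCast, ← zpow_add₀ two_ne_zero]
    ring_nf
  have hfreq : Q.l + 1 ≤ 2 ^ d * (P.l + 1) := hl ▸ Nat.lt_mul_div_succ Q.l (by positivity)
  rw [hscale, mul_assoc]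
  gcongr
  exact_mod_cast hfreq

theorem finite_Icc_bitile (P Q : Bitile) : (Icc P Q).Finite := by
  refine Finite.of_injOn (f := Bitile.k) (t := Icc P.k Q.k) ?_ ?_ (finite_Icc _ _)
  · rintro R ⟨hPR, hRQ⟩
    obtain ⟨d, hk, -⟩ := Bitile.le_iff.1 hPR
    obtain ⟨d', hk', -⟩ := Bitile.le_iff.1 hRQ
    exact ⟨by omega, by omega⟩
  · rintro ⟨k, n, l⟩ ⟨hPR, hRQ⟩ ⟨k', n', l'⟩ ⟨hPR', hRQ'⟩ rfl
    obtain ⟨d, hk, hn, -⟩ := Bitile.le_iff.1 hPR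
    obtain ⟨e, hk₂, -, hl⟩ := Bitile.le_iff.1 hRQ
    obtain ⟨d', hk', hn', -⟩ := Bitile.le_iff.1 hPR'
    obtain ⟨e', hk₂', -, hl'⟩ := Bitile.le_iff.1 hRQ'
    obtain rfl : d = d' := by simp only at *; omega
    obtain rfl : e = e' := by simp only at *; omega
    simp_all

theorem exists_ordConnected_finset_superset {A : Type*} [Preorder A]
    (hIcc : ∀ a b : A, (Icc a b).Finite) {U : Set A} (hU : IsUpperSet U) {s : Finset A}
    (hs : (s : Set A) ⊆ U) :
    ∃ t : Finset A, s ⊆ t ∧ (t : Set A) ⊆ U ∧ (t : Set A).OrdConnected := by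
  have hfin : (⋃ a ∈ s, ⋃ b ∈ s, Icc a b).Finite :=
    s.finite_toSet.biUnion fun a _ => s.finite_toSet.biUnion fun b _ => hIcc a b
  refine ⟨hfin.toFinset, fun a ha => ?_, ?_, ?_⟩
  · simp only [Finite.mem_toFinset, mem_iUnion]
    exact ⟨a, ha, a, ha, le_rfl, le_rfl⟩
  · rw [hfin.coe_toFinset]
    exact iUnion₂_subset fun a ha => iUnion₂_subset fun b _ c hc => hU hc.1 (hs ha)
  · rw [hfin.coe_toFinset]
    refine ⟨fun c hc d hd x hx => ?_⟩
    simp only [mem_iUnion] at hc hd ⊢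
    obtain ⟨a, ha, -, -, hac, -⟩ := hc
    obtain ⟨-, -, b, hb, -, hdb⟩ := hd
    exact ⟨a, ha, b, hb, hac.trans hx.1, hx.2.trans hdb⟩

theorem norm_quartileForm_le (hf : ∀ i, MemLp (f i) 2) (hf₀ : Integrable (f 0)) (L N : ℕ)
    {Ω : Set ℝ} {j : Fin 3} (hΩ : ∀ x ∈ Ω, f j x = 0) {v : Fin 3 → ℝ} {τ : ℝ}
    (hv : ∀ i, 0 < v i) (hτ : 0 < τ) (hnorm : ∀ i, ∫ x, ‖f i x‖ ^ 2 ≤ v i)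
    (hsize : ∀ i (P : Bitile), ¬ P.timeI ⊆ Ω → ∫ x in P.timeI, ‖f i x‖ ^ 2 ≤ v i * τ * 2 ^ P.k) :
    ‖quartileForm (L + 1) N (f 0) (f 1) (f 2)‖ ≤ 240 * (∏ i, √(v i)) * √τ := by
  classical
  refine norm_le_of_hasSum_of_cofinal (hasSum_quartileForm hf hf₀ L N) fun s hs => ?_
  obtain ⟨t, hst, htN, ht⟩ :=
    exists_ordConnected_finset_superset finite_Icc_bitile (isUpperSet_stripBitiles N) hs
  refine ⟨t, hst, htN, ?_⟩
  have hfilter : ((t.filter fun P => ¬ P.timeI ⊆ Ω : Finset Bitile) : Set Bitile).OrdConnected := by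
    refine ⟨fun P hP Q hQ R hR => ?_⟩
    rw [Finset.mem_coe, Finset.mem_filter] at hP hQ ⊢
    exact ⟨ht.out hP.1 hQ.1 hR, fun h => hP.2 ((timeI_subset_of_le hR.1).trans h)⟩
  rw [← Finset.sum_filter_of_ne (p := fun P : Bitile => ¬ P.timeI ⊆ Ω) fun P _ hne hsub =>
    hne (bitileTerm_coef_eq_zero L (.of_forall fun x hx => hΩ x (hsub hx)))]
  exact (formData_coef hf L).norm_sum_le hv
    (fun i 𝔭 h𝔭 => (besselBound_coefEnergy (hf i) _ 𝔭 h𝔭).trans (hnorm i)) hfilter hτ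
    fun i => sizeLE_coefEnergy (hf i) _ fun P hP => hsize i P (Finset.mem_filter.1 hP).2

end FormBound

/-! ### The dyadic maximal function and the exceptional set -/

section LaminarFamily

variable {X : Type*}

theorem exists_pairwiseDisjoint_subset_sUnion {𝓘 : Set (Set X)} (hfin : 𝓘.Finite)
    (hlam : ∀ I ∈ 𝓘, ∀ J ∈ 𝓘, I ⊆ J ∨ J ⊆ I ∨ Disjoint I J) :
    ∃ 𝓙 ⊆ 𝓘, 𝓙.PairwiseDisjoint id ∧ ⋃₀ 𝓘 ⊆ ⋃₀ 𝓙 := by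
  refine ⟨{J | Maximal (· ∈ 𝓘) J}, fun J hJ => hJ.prop, fun I hI J hJ hne => ?_, ?_⟩
  · rcases hlam I hI.prop J hJ.prop with h | h | h
    · exact absurd (hI.eq_of_le hJ.prop h) hne
    · exact absurd (hJ.eq_of_le hI.prop h).symm hne
    · exact h
  · rintro x ⟨I, hI, hxI⟩
    obtain ⟨J, hIJ, hJ⟩ := hfin.exists_le_maximal hI
    exact ⟨J, hJ, hIJ hxI⟩

variable [MeasurableSpace X] {μ ν : Measure X} {𝓘 : Set (Set X)} {c : ℝ≥0∞}

theorem mul_measure_sUnion_le_of_finite (hfin : 𝓘.Finite)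
    (hlam : ∀ I ∈ 𝓘, ∀ J ∈ 𝓘, I ⊆ J ∨ J ⊆ I ∨ Disjoint I J) (hmeas : ∀ I ∈ 𝓘, MeasurableSet I)
    (hle : ∀ I ∈ 𝓘, c * μ I ≤ ν I) : c * μ (⋃₀ 𝓘) ≤ ν univ := by
  obtain ⟨𝓙, hsub, hdisj, hcover⟩ := exists_pairwiseDisjoint_subset_sUnion hfin hlam
  have hcount : 𝓙.Countable := (hfin.subset hsub).countable
  calc
    c * μ (⋃₀ 𝓘) ≤ c * ∑' J : 𝓙, μ J := by
      gcongr
      rw [sUnion_eq_biUnion (s := 𝓙)] at hcover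
      exact (measure_mono hcover).trans (measure_biUnion_le μ hcount _)
    _ ≤ ∑' J : 𝓙, ν J := by
      rw [← ENNReal.tsum_mul_left]
      exact ENNReal.tsum_le_tsum fun J => hle J (hsub J.2)
    _ = ν (⋃₀ 𝓙) := (measure_sUnion hcount hdisj fun J hJ => hmeas J (hsub hJ)).symm
    _ ≤ ν univ := measure_mono (subset_univ _)

theorem mul_measure_sUnion_le (hcount : 𝓘.Countable)
    (hlam : ∀ I ∈ 𝓘, ∀ J ∈ 𝓘, I ⊆ J ∨ J ⊆ I ∨ Disjoint I J) (hmeas : ∀ I ∈ 𝓘, MeasurableSet I)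
    (hle : ∀ I ∈ 𝓘, c * μ I ≤ ν I) : c * μ (⋃₀ 𝓘) ≤ ν univ := by
  have := hcount.to_subtype
  have hdir : Directed (· ⊆ ·) fun s : Finset 𝓘 => ⋃ I ∈ s, (I : Set X) :=
    directed_of_isDirected_le fun _ _ h => biUnion_subset_biUnion_left h
  rw [sUnion_eq_iUnion, iUnion_eq_iUnion_finset, hdir.measure_iUnion, ENNReal.mul_iSup]
  refine iSup_le fun s => ?_
  have hsub : ∀ I ∈ (Subtype.val '' (s : Set 𝓘) : Set (Set X)), I ∈ 𝓘 := by
    rintro _ ⟨I, -, rfl⟩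
    exact I.2
  have himage : ⋃ I ∈ s, (I : Set X) = ⋃₀ (Subtype.val '' (s : Set 𝓘)) := by
    rw [sUnion_image]
    rfl
  rw [himage]
  exact mul_measure_sUnion_le_of_finite (s.finite_toSet.image _)
    (fun I hI J hJ => hlam I (hsub I hI) J (hsub J hJ)) (fun I hI => hmeas I (hsub I hI))
    fun I hI => hle I (hsub I hI)

end LaminarFamily

section DyadicMax

theorem measurableSet_dyadicI (k : ℤ) (n : ℕ) : MeasurableSet (dyadicI k n) := measurableSet_Ico

theorem volume_dyadicI (k : ℤ) (n : ℕ) : volume (dyadicI k n) = ENNReal.ofReal (2 ^ k) :=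
  Tile.volume_timeI ⟨k, n, 0⟩

theorem dyadicI_subset_or_disjoint_of_le {k k' : ℤ} (hk : k ≤ k') (n n' : ℕ) :
    dyadicI k n ⊆ dyadicI k' n' ∨ Disjoint (dyadicI k n) (dyadicI k' n') := by
  obtain ⟨d, rfl⟩ := Int.le.dest hk
  have hparent : dyadicI k n ⊆ dyadicI (k + d) (n / 2 ^ d) :=
    Tile.timeI_subset_of_div_eq (p := ⟨k, n, 0⟩) (q := ⟨k + d, n / 2 ^ d, 0⟩) rfl rfl
  rcases eq_or_ne (n / 2 ^ d) n' with rfl | hne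
  · exact .inl hparent
  · exact .inr (Disjoint.mono_left hparent
      (Tile.disjoint_timeI (p := ⟨k + d, n / 2 ^ d, 0⟩) (q := ⟨k + d, n', 0⟩) rfl hne))

theorem dyadicI_laminar (k k' : ℤ) (n n' : ℕ) : dyadicI k n ⊆ dyadicI k' n' ∨
    dyadicI k' n' ⊆ dyadicI k n ∨ Disjoint (dyadicI k n) (dyadicI k' n') := by
  rcases le_total k k' with hk | hk
  · exact (dyadicI_subset_or_disjoint_of_le hk n n').imp_right .inr
  · exact .inr ((dyadicI_subset_or_disjoint_of_le hk n' n).imp_right fun h => h.symm)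

variable {f : ℝ → ℂ} {E : Set ℝ} {c : ℝ≥0∞} {x : ℝ}

theorem lt_dyadicMax_iff : c < dyadicMax f x ↔
    ∃ k n, x ∈ dyadicI k n ∧ c * volume (dyadicI k n) < ∫⁻ y in dyadicI k n, ‖f y‖₊ := by
  simp only [dyadicMax, lt_iSup_iff, exists_prop]
  refine exists_congr fun k => exists_congr fun n => and_congr_right fun _ => ?_
  have hpos : (0 : ℝ) < 2 ^ k := by positivity
  rw [volume_dyadicI, mul_comm _ (∫⁻ y in dyadicI k n, (‖f y‖₊ : ℝ≥0∞)), ← div_eq_mul_inv,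
    ENNReal.lt_div_iff_mul_lt (.inl (ofReal_pos.2 hpos).ne') (.inl ofReal_ne_top)]

theorem setOf_lt_dyadicMax_eq_sUnion (f : ℝ → ℂ) (c : ℝ≥0∞) :
    {x | c < dyadicMax f x} = ⋃₀ {I ∈ range fun kn : ℤ × ℕ => dyadicI kn.1 kn.2 |
      c * volume I < ∫⁻ y in I, ‖f y‖₊} := by
  ext x
  simp only [mem_ofPred_eq, lt_dyadicMax_iff, mem_sUnion, mem_range, Prod.exists]
  grind

theorem measurableSet_lt_dyadicMax (f : ℝ → ℂ) (c : ℝ≥0∞) :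
    MeasurableSet {x | c < dyadicMax f x} := by
  rw [setOf_lt_dyadicMax_eq_sUnion]
  refine .sUnion ((countable_range _).mono (sep_subset _ _)) ?_
  rintro _ ⟨⟨kn, rfl⟩, -⟩
  exact measurableSet_dyadicI _ _

theorem mul_volume_lt_dyadicMax_le (f : ℝ → ℂ) (c : ℝ≥0∞) :
    c * volume {x | c < dyadicMax f x} ≤ ∫⁻ x, ‖f x‖₊ := by
  rw [setOf_lt_dyadicMax_eq_sUnion, ← setLIntegral_univ, ← withDensity_apply _ .univ]
  refine mul_measure_sUnion_le ((countable_range _).mono (sep_subset _ _)) ?_ ?_ ?_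
  · rintro _ ⟨⟨kn, rfl⟩, -⟩ _ ⟨⟨kn', rfl⟩, -⟩
    exact dyadicI_laminar _ _ _ _
  · rintro _ ⟨⟨kn, rfl⟩, -⟩
    exact measurableSet_dyadicI _ _
  · rintro _ ⟨⟨kn, rfl⟩, h⟩
    rw [withDensity_apply _ (measurableSet_dyadicI _ _)]
    exact h.le

theorem setLIntegral_nnnorm_indicator_one (hE : MeasurableSet E) (J : Set ℝ) :
    ∫⁻ y in J, ‖E.indicator (1 : ℝ → ℂ) y‖₊ = volume (E ∩ J) := by
  rw [← Measure.restrict_apply hE, ← lintegral_indicator_one hE]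
  refine lintegral_congr fun y => ?_
  by_cases hy : y ∈ E <;> simp [hy]

theorem mul_volume_lt_dyadicMax_indicator_le (hE : MeasurableSet E) (c : ℝ≥0∞) :
    c * volume {x | c < dyadicMax (E.indicator 1) x} ≤ volume E := by
  refine (mul_volume_lt_dyadicMax_le _ c).trans_eq ?_
  rw [← setLIntegral_univ, setLIntegral_nnnorm_indicator_one hE, inter_univ]

theorem volume_inter_le_of_dyadicMax_le (hE : MeasurableSet E)
    (h : dyadicMax (E.indicator 1) x ≤ c) {k : ℤ} {n : ℕ} (hx : x ∈ dyadicI k n) :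
    volume (E ∩ dyadicI k n) ≤ c * volume (dyadicI k n) := by
  contrapose! h
  rw [← setLIntegral_nnnorm_indicator_one hE] at h
  exact lt_dyadicMax_iff.2 ⟨k, n, hx, h⟩

theorem dyadicMax_indicator_le_one (hE : MeasurableSet E) (x : ℝ) :
    dyadicMax (E.indicator 1) x ≤ 1 := by
  refine le_of_not_gt fun h => ?_
  obtain ⟨k, n, -, h⟩ := lt_dyadicMax_iff.1 h
  rw [setLIntegral_nnnorm_indicator_one hE, one_mul] at h
  exact h.not_ge (measure_mono inter_subset_right)

theorem dyadicMax_indicator_eq_zero (hE : MeasurableSet E) (h₀ : volume E = 0) (x : ℝ) :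
    dyadicMax (E.indicator 1) x = 0 := by
  refine nonpos_iff_eq_zero.1 (le_of_not_gt fun h => ?_)
  obtain ⟨k, n, -, h⟩ := lt_dyadicMax_iff.1 h
  rw [setLIntegral_nnnorm_indicator_one hE, measure_mono_null inter_subset_left h₀] at h
  exact _root_.not_lt_zero h

end DyadicMax

section MajorSubset

variable {ι : Type*} {E : ι → Set ℝ} {i j : ι}

/-- The exceptional set to be removed from `E j`: the points at which the dyadic maximal function
of some `1_{E i}` exceeds `6 |E i| / |E j|`.  With the constant `6`, three such superlevel sets have
total measure at most `|E j| / 2`, and they are empty for measures within a factor of four. -/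
def exceptionalSet (E : ι → Set ℝ) (j : ι) : Set ℝ :=
  ⋃ i, {x | volume (E i) * (6 / volume (E j)) < dyadicMax ((E i).indicator 1) x}

theorem measurableSet_exceptionalSet [Countable ι] (E : ι → Set ℝ) (j : ι) :
    MeasurableSet (exceptionalSet E j) :=
  .iUnion fun _ => measurableSet_lt_dyadicMax _ _

theorem volume_lt_dyadicMax_indicator_le {A B : Set ℝ} (hA : MeasurableSet A)
    (hfinA : volume A < ∞) (hfinB : volume B < ∞) (hB : volume B = 0 → volume A = 0) :
    volume {x | volume A * (6 / volume B) < dyadicMax (A.indicator 1) x} ≤ volume B / 6 := by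
  rcases eq_or_ne (volume A) 0 with h₀ | h₀
  · simp [dyadicMax_indicator_eq_zero hA h₀]
  have hweak := mul_volume_lt_dyadicMax_indicator_le hA (volume A * (6 / volume B))
  rw [mul_assoc] at hweak
  have hcancel := (ENNReal.mul_le_mul_iff_right h₀ hfinA.ne).1 (hweak.trans_eq (mul_one _).symm)
  rwa [ENNReal.le_div_iff_mul_le (by simp) (by simp), mul_comm, ← one_mul (volume B),
    ← ENNReal.div_le_iff (mt hB h₀) hfinB.ne, ENNReal.mul_div_right_comm, one_mul]

theorem volume_exceptionalSet_le {E : Fin 3 → Set ℝ} {j : Fin 3} (hE : ∀ i, MeasurableSet (E i))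
    (hfin : ∀ i, volume (E i) < ∞) (hj : volume (E j) = 0 → ∀ i, volume (E i) = 0) :
    volume (exceptionalSet E j) ≤ volume (E j) / 2 :=
  calc
    volume (exceptionalSet E j) ≤ ∑ _ : Fin 3, volume (E j) / 6 :=
      (measure_iUnion_fintype_le _ _).trans <| Finset.sum_le_sum fun i _ =>
        volume_lt_dyadicMax_indicator_le (hE i) (hfin i) (hfin j) fun h => hj h i
    _ = volume (E j) / 2 := by
      have hsix : (2 : ℝ≥0∞) * (3 : ℕ) = 6 := by norm_num
      rw [Finset.sum_const, Finset.card_fin, nsmul_eq_mul,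
        ENNReal.eq_div_iff two_ne_zero ofNat_ne_top, ← mul_assoc, hsix,
        ENNReal.mul_div_cancel (by simp) (by simp)]

theorem exceptionalSet_eq_empty (hE : ∀ i, MeasurableSet (E i)) (hfin : ∀ i, volume (E i) < ∞)
    (hcomparable : ∀ i i', volume (E i) ≤ 4 * volume (E i')) : exceptionalSet E j = ∅ := by
  refine iUnion_eq_empty.2 fun i => eq_empty_of_forall_notMem fun x => ?_
  rw [mem_ofPred_eq, not_lt]
  rcases eq_or_ne (volume (E j)) 0 with h₀ | h₀
  · rw [dyadicMax_indicator_eq_zero (hE i) (by simpa [h₀] using hcomparable i j)]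
    exact zero_le
  · refine (dyadicMax_indicator_le_one (hE i) x).trans ?_
    rw [← mul_div_assoc, ENNReal.le_div_iff_mul_le (.inl h₀) (.inl (hfin j).ne), one_mul, mul_comm]
    exact (hcomparable j i).trans (by gcongr; norm_num)

theorem half_volume_le_volume_sdiff {A Ω : Set ℝ} (hfin : volume A < ∞)
    (hΩ : volume Ω ≤ volume A / 2) : volume A / 2 ≤ volume (A \ Ω) :=
  calc
    volume A / 2 = volume A - volume A / 2 := (ENNReal.sub_half hfin.ne).symm
    _ ≤ volume A - volume Ω := tsub_le_tsub_left hΩ _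
    _ ≤ volume (A \ Ω) := le_measure_sdiff

theorem measureReal_inter_timeI_le (hE : MeasurableSet (E i)) (hfin : volume (E i) < ∞)
    (hj : volume (E j) ≠ 0) {P : Bitile} (hP : ¬ P.timeI ⊆ exceptionalSet E j) :
    volume.real (E i ∩ P.timeI) ≤ volume.real (E i) * (6 / volume.real (E j)) * 2 ^ P.k := by
  obtain ⟨x, hxP, hx⟩ := not_subset.1 hP
  have hmax : dyadicMax ((E i).indicator 1) x ≤ volume (E i) * (6 / volume (E j)) :=
    le_of_not_gt fun h => hx (mem_iUnion.2 ⟨i, h⟩)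
  have hle := ENNReal.toReal_mono ?_ (volume_inter_le_of_dyadicMax_le hE hmax hxP)
  · refine hle.trans_eq ?_
    rw [volume_dyadicI]
    simp only [toReal_mul, toReal_div, toReal_ofNat, measureReal_def]
    rw [toReal_ofReal (by positivity)]
  · rw [volume_dyadicI]
    exact ENNReal.mul_ne_top (ENNReal.mul_ne_top hfin.ne (ENNReal.div_ne_top (by simp) hj))
      ofReal_ne_top

end MajorSubset

section DominatedByIndicator

variable {f : ℝ → ℂ} {E : Set ℝ}

theorem memLp_of_norm_le_indicator (hf : Measurable f) (hE : MeasurableSet E)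
    (hfin : volume E < ∞) (hle : ∀ x, ‖f x‖ ≤ E.indicator 1 x) (p : ℝ≥0∞) : MemLp f p :=
  (memLp_indicator_const p hE (1 : ℝ) (.inr hfin.ne)).mono' hf.aestronglyMeasurable
    (.of_forall hle)

theorem ae_eq_zero_of_norm_le_indicator (h₀ : volume E = 0)
    (hle : ∀ x, ‖f x‖ ≤ E.indicator 1 x) : f =ᵐ[volume] 0 := by
  filter_upwards [measure_eq_zero_iff_ae_notMem.1 h₀] with x hx
  simpa [hx] using hle x

theorem setIntegral_norm_sq_le_measureReal_inter (hE : MeasurableSet E) (hfin : volume E < ∞)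
    (hle : ∀ x, ‖f x‖ ≤ E.indicator 1 x) (J : Set ℝ) :
    ∫ x in J, ‖f x‖ ^ 2 ≤ volume.real (E ∩ J) := by
  rw [← measureReal_restrict_apply hE, ← integral_indicator_one hE]
  refine integral_mono_of_nonneg (.of_forall fun x => sq_nonneg _) ?_ (.of_forall fun x => ?_)
  · exact (integrable_indicator_iff hE).2 (integrableOn_const (by
      simpa [Measure.restrict_apply hE] using measure_inter_lt_top_of_left_ne_top hfin.ne |>.ne))
  · have hx := hle x
    by_cases hxE : x ∈ E <;> simp_all [pow_le_one₀]

end DominatedByIndicator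

theorem prod_sqrt_le_prod_rpow_mul_sqrt {ι : Type*} [Fintype ι] {α v : ι → ℝ} {w : ℝ}
    (hv : ∀ i, 0 < v i) (hvw : ∀ i, v i ≤ w) (hw : 0 < w) (hα : ∀ i, α i ≤ 1 / 2)
    (hsum : ∑ i, (1 / 2 - α i) = 1 / 2) :
    ∏ i, √(v i) ≤ (∏ i, v i ^ α i) * √w :=
  calc
    ∏ i, √(v i) = ∏ i, v i ^ α i * v i ^ (1 / 2 - α i) := by
      refine Finset.prod_congr rfl fun i _ => ?_
      rw [← Real.rpow_add (hv i), add_sub_cancel, Real.sqrt_eq_rpow]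
    _ ≤ ∏ i, v i ^ α i * w ^ (1 / 2 - α i) := by
      refine Finset.prod_le_prod (fun i _ => ?_) fun i _ => ?_
      · have := hv i
        positivity
      · have := hv i
        gcongr
        exacts [sub_nonneg.2 (hα i), hvw i]
    _ = (∏ i, v i ^ α i) * √w := by
      rw [Finset.prod_mul_distrib, ← Real.rpow_sum_of_pos hw, hsum, Real.sqrt_eq_rpow]

section RestrictedType

variable {E : Fin 3 → Set ℝ} {j : Fin 3} {f : Fin 3 → ℝ → ℂ}

theorem norm_quartileForm_le_of_eqOn_exceptionalSet (hE : ∀ i, MeasurableSet (E i))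
    (hfin : ∀ i, volume (E i) < ∞) (hpos : ∀ i, 0 < volume.real (E i))
    (hf : ∀ i, Measurable (f i)) (hle : ∀ i x, ‖f i x‖ ≤ (E i).indicator 1 x)
    (hzero : EqOn (f j) 0 (exceptionalSet E j)) (L N : ℕ) :
    ‖quartileForm (L + 1) N (f 0) (f 1) (f 2)‖ ≤
      240 * (∏ i, √(volume.real (E i))) * √(6 / volume.real (E j)) := by
  have hLp : ∀ i p, MemLp (f i) p := fun i =>
    memLp_of_norm_le_indicator (hf i) (hE i) (hfin i) (hle i)
  have hsq : ∀ i J, ∫ x in J, ‖f i x‖ ^ 2 ≤ volume.real (E i ∩ J) := fun i =>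
    setIntegral_norm_sq_le_measureReal_inter (hE i) (hfin i) (hle i)
  refine norm_quartileForm_le (fun i => hLp i 2) (memLp_one_iff_integrable.1 (hLp 0 1)) L N hzero
    hpos (div_pos (by norm_num) (hpos j)) (fun i => ?_) fun i P hP => (hsq i P.timeI).trans ?_
  · simpa using hsq i univ
  · exact measureReal_inter_timeI_le (hE i) (hfin i)
      (measureReal_ne_zero_iff (hfin j).ne |>.1 (hpos j).ne') hP

theorem prod_sqrt_mul_sqrt_div_le_prod_rpow {α v : Fin 3 → ℝ} (hv : ∀ i, 0 < v i)
    (hmax : ∀ i, v i ≤ v j) (hα : ∀ i, α i ≤ 1 / 2) (hsum : ∑ i, α i = 1) :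
    240 * (∏ i, √(v i)) * √(6 / v j) ≤ 600 * ∏ i, v i ^ α i := by
  have hexp : ∑ i, (1 / 2 - α i) = 1 / 2 := by
    rw [Finset.sum_sub_distrib, hsum]
    norm_num
  have hprod := prod_sqrt_le_prod_rpow_mul_sqrt hv hmax (hv j) hα hexp
  have hsqrt : 0 < √(v j) := Real.sqrt_pos.2 (hv j)
  have hsix : √6 ≤ 5 / 2 := Real.sqrt_le_iff.2 (by norm_num)
  have hnonneg : 0 ≤ ∏ i, v i ^ α i := Finset.prod_nonneg fun i _ => Real.rpow_nonneg (hv i).le _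
  calc
    240 * (∏ i, √(v i)) * √(6 / v j) ≤
        240 * ((∏ i, v i ^ α i) * √(v j)) * (5 / 2 / √(v j)) := by
      rw [Real.sqrt_div (by norm_num)]
      gcongr
    _ = 600 * ∏ i, v i ^ α i := by
      field_simp
      ring

theorem nnnorm_quartileForm_le_prod_rpow (hE : ∀ i, MeasurableSet (E i))
    (hfin : ∀ i, volume (E i) < ∞) (hmax : ∀ i, volume (E i) ≤ volume (E j))
    (hf : ∀ i, Measurable (f i)) (hle : ∀ i x, ‖f i x‖ ≤ (E i).indicator 1 x)
    (hzero : EqOn (f j) 0 (exceptionalSet E j)) (L N : ℕ) {α : Fin 3 → ℝ}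
    (hα : ∀ i, α i ≤ 1 / 2) (hsum : ∑ i, α i = 1) :
    (‖quartileForm (L + 1) N (f 0) (f 1) (f 2)‖₊ : ℝ≥0∞) ≤ 600 * ∏ i, volume (E i) ^ α i := by
  by_cases hnull : ∃ i, volume (E i) = 0
  · obtain ⟨i, hi⟩ := hnull
    have hLp : ∀ i p, MemLp (f i) p := fun i =>
      memLp_of_norm_le_indicator (hf i) (hE i) (hfin i) (hle i)
    rw [quartileForm_eq_zero (fun i => hLp i 2) (memLp_one_iff_integrable.1 (hLp 0 1)) L N
      (ae_eq_zero_of_norm_le_indicator hi (hle i)), nnnorm_zero]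
    exact zero_le
  · push Not at hnull
    have hpos : ∀ i, 0 < volume.real (E i) := fun i => toReal_pos (hnull i) (hfin i).ne
    have hrpow : ∀ i, volume (E i) ^ α i = ENNReal.ofReal (volume.real (E i) ^ α i) := fun i => by
      rw [← ENNReal.ofReal_rpow_of_pos (hpos i), measureReal_def, ofReal_toReal (hfin i).ne]
    have hbound := (norm_quartileForm_le_of_eqOn_exceptionalSet hE hfin hpos hf hle hzero L N).trans
      (prod_sqrt_mul_sqrt_div_le_prod_rpow hpos (fun i => toReal_mono (hfin j).ne (hmax i)) hα hsum)
    rw [← enorm_eq_nnnorm, ← ofReal_norm, Finset.prod_congr rfl fun i _ => hrpow i,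
      ← ENNReal.ofReal_prod_of_nonneg fun i _ => Real.rpow_nonneg (hpos i).le _,
      show (600 : ℝ≥0∞) = ENNReal.ofReal 600 by simp, ← ENNReal.ofReal_mul (by norm_num)]
    exact ENNReal.ofReal_le_ofReal hbound

end RestrictedType

theorem triangle_c_general :
    ∃ C : ℝ≥0, ∀ E : Fin 3 → Set ℝ,
      (∀ i, MeasurableSet (E i)) → (∀ i, volume (E i) < ∞) →
      ∀ j : Fin 3, (∀ i, volume (E i) ≤ volume (E j)) →
      ∃ E' : Set ℝ, MeasurableSet E' ∧ E' ⊆ E j ∧ volume (E j) / 2 ≤ volume E' ∧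
        ((∀ i i', volume (E i) ≤ 4 * volume (E i')) → E' = E j) ∧
        ∀ (L N : ℕ), 1 ≤ L → ∀ f : Fin 3 → ℝ → ℂ, (∀ i, Measurable (f i)) →
          (∀ i, i ≠ j → ∀ x, ‖f i x‖ ≤ (E i).indicator 1 x) →
          (∀ x, ‖f j x‖ ≤ E'.indicator 1 x) →
          ∀ α : Fin 3 → ℝ, (∀ i, α i ≤ 1 / 2) → ∑ i, α i = 1 →
            (‖quartileForm L N (f 0) (f 1) (f 2)‖₊ : ℝ≥0∞) ≤ C * ∏ i, volume (E i) ^ α i := by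
  refine ⟨600, fun E hE hfin j hmax => ⟨E j \ exceptionalSet E j,
    (hE j).diff (measurableSet_exceptionalSet E j), sdiff_subset, ?_, fun hcomparable => ?_, ?_⟩⟩
  · exact half_volume_le_volume_sdiff (hfin j)
      (volume_exceptionalSet_le hE hfin fun h₀ i => nonpos_iff_eq_zero.1 ((hmax i).trans_eq h₀))
  · rw [exceptionalSet_eq_empty hE hfin hcomparable, sdiff_empty]
  · rintro L N hL f hf hle hlej α hα hsum
    obtain ⟨L, rfl⟩ := Nat.exists_eq_add_of_le' hL
    refine nnnorm_quartileForm_le_prod_rpow hE hfin hmax hf (fun i x => ?_) (fun x hx => ?_) L N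
      hα hsum
    · rcases eq_or_ne i j with rfl | hij
      · exact (hlej x).trans (indicator_le_indicator_of_subset sdiff_subset (by simp) x)
      · exact hle i hij x
    · simpa [hx] using hlej x

/-- Proposition (Triangle `c`). -/
theorem triangle_c :
    ∀ α : Fin 3 → ℝ, 0 ≤ α 0 → α 0 ≤ 1/2 → 0 ≤ α 1 → α 1 < 1/2 → 0 ≤ α 2 → α 2 < 1/2 →
      α 0 + α 1 + α 2 = 1 →
    ∃ C : ℝ≥0, ∀ E : Fin 3 → Set ℝ,
      (∀ i, MeasurableSet (E i)) → (∀ i, E i ⊆ Ici 0) → (∀ i, volume (E i) < ∞) →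
      ∀ j : Fin 3, (∀ i, volume (E i) ≤ volume (E j)) →
      ∃ E' : Set ℝ, MeasurableSet E' ∧ E' ⊆ E j ∧ volume (E j) / 2 ≤ volume E' ∧
        ((∀ i i', volume (E i) ≤ 4 * volume (E i')) → E' = E j) ∧
        ∀ (L N : ℕ), 2 ≤ L → ∀ f : Fin 3 → ℝ → ℂ, (∀ i, Measurable (f i)) →
          (∀ i, i ≠ j → ∀ x, ‖f i x‖ ≤ (E i).indicator 1 x) →
          (∀ x, ‖f j x‖ ≤ E'.indicator 1 x) →
          (‖quartileForm L N (f 0) (f 1) (f 2)‖₊ : ℝ≥0∞) ≤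
            C * volume (E 0) ^ (α 0) * volume (E 1) ^ (α 1) * volume (E 2) ^ (α 2) := by
  intro α _ hα₀ _ hα₁ _ hα₂ hsum
  obtain ⟨C, hC⟩ := triangle_c_general
  refine ⟨C, fun E hE _ hfin j hmax => ?_⟩
  obtain ⟨E', hE', hsub, hmajor, hfull, hbound⟩ := hC E hE hfin j hmax
  refine ⟨E', hE', hsub, hmajor, hfull, fun L N hL f hf hle hlej => ?_⟩
  have hα : ∀ i, α i ≤ 1 / 2 := Fin.forall_fin_succ.2 ⟨hα₀, Fin.forall_fin_two.2 ⟨hα₁.le, hα₂.le⟩⟩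
  simpa only [Fin.prod_univ_three, mul_assoc] using
    hbound L N (one_le_two.trans hL) f hf hle hlej α hα (Fin.sum_univ_three α ▸ hsum)

end Quartile
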